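/- arXiv:1503.06243 — 3 statements merged into one kernel-verified Lean document; each statement's English description precedes it below -/
import Mathlib

section
/- For n ≥ 4 and 0 ≤ d ≤ n-3, the number of ways to choose d pairwise non-crossing diagonals in a convex n-gon equals (1/(n+d)) · C(n+d, d+1) · C(n-3, d). -/
/-- Cyclic adjacency of vertices `i, j` of the `n`-gon (labeled `0, …, n-1` in cyclic order). -/
def cycAdj (n : ℕ) (i j : Fin n) : Prop :=
  (i.val + 1) % n = j.val ∨ (j.val + 1) % n = i.val

/-- `p` is a diagonal of the convex `n`-gon: a pair of distinct non-adjacent vertices. -/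
def IsDiagonal (n : ℕ) (p : Finset (Fin n)) : Prop :=
  ∃ i j : Fin n, i ≠ j ∧ ¬ cycAdj n i j ∧ p = {i, j}

/-- Two chords of the convex `n`-gon cross (intersect in their interiors):
the endpoints interlace along the boundary. -/
def Cross (n : ℕ) (p q : Finset (Fin n)) : Prop :=
  ∃ a b c d : Fin n, a < c ∧ c < b ∧ b < d ∧
    ((p = {a, b} ∧ q = {c, d}) ∨ (p = {c, d} ∧ q = {a, b}))

/-! Cut the polygon open at a side, so that the vertices become the points `0, …, N` of a line and
the diagonals become arcs above it. Refine the count of non-crossing arc systems by the number of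
edges of the outer boundary, the path of points and arcs seen from above. If the point `N` is
hidden by arcs ending at `N + 1`, removing the longest of these gives a system with one arc less
and a longer outer boundary; if it is not hidden, the point `N + 1` can be dropped. The resulting
recurrence for the number of systems whose outer boundary has at least `r` edges is solved by a
rational function times a product of two binomial coefficients. Sets of diagonals correspond to
the systems whose outer boundary has at least two edges, since a single edge would be the arc over
the side that was cut. -/

open Finset

section

/-- The arcs `p` and `q`, drawn above the line of integers, cross, with `p` starting first. -/
def Interlace (p q : ℕ × ℕ) : Prop :=
  p.1 < q.1 ∧ q.1 < p.2 ∧ p.2 < q.2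

/-- A non-crossing family of arcs `(i, j)` above the points `0, …, N`. Arcs between neighbouring
points are excluded, so that cutting the `(N + 1)`-gon open at the side `{0, N}` turns the
non-crossing sets of diagonals into the arc systems not containing `(0, N)`. -/
structure IsArcSystem (N : ℕ) (S : Finset (ℕ × ℕ)) : Prop where
  add_two_le : ∀ p ∈ S, p.1 + 2 ≤ p.2
  le : ∀ p ∈ S, p.2 ≤ N
  not_interlace : ∀ p ∈ S, ∀ q ∈ S, ¬ Interlace p q

open scoped Classical in
/-- The arc systems on `0, …, N` with `d` arcs, as a finite set. -/
noncomputable def arcSystems (N d : ℕ) : Finset (Finset (ℕ × ℕ)) :=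
  {S ∈ powersetCard d (range (N + 1) ×ˢ range (N + 1)) | IsArcSystem N S}

/-- The point `v` can be reached from above without meeting an arc of `S`. -/
def Visible (S : Finset (ℕ × ℕ)) (v : ℕ) : Prop :=
  ∀ p ∈ S, ¬ (p.1 < v ∧ v < p.2)

instance (S : Finset (ℕ × ℕ)) : DecidablePred (Visible S) :=
  fun _ => inferInstanceAs (Decidable (∀ p ∈ S, _))

/-- The number of edges of the outer boundary of an arc system on `0, …, N`; as `N` is always
visible, this is the number of visible points other than `N`. -/
def width (S : Finset (ℕ × ℕ)) (N : ℕ) : ℕ :=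
  Nat.count (Visible S) N

/-- The number of arc systems on `0, …, N` with `d` arcs and width at least `r`, the quantity for
which a recurrence and a closed formula are established. -/
noncomputable def wideCount (N r d : ℕ) : ℕ :=
  #{S ∈ arcSystems N d | r ≤ width S N}

variable {N r d u M : ℕ} {S T : Finset (ℕ × ℕ)}

theorem mem_arcSystems : S ∈ arcSystems N d ↔ IsArcSystem N S ∧ #S = d := by
  simp only [arcSystems, mem_filter, mem_powersetCard]
  refine ⟨fun h => ⟨h.2, h.1.2⟩, fun h => ⟨⟨fun p hp => ?_, h.2⟩, h.1⟩⟩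
  have hp_short := h.1.add_two_le p hp
  have hp_le := h.1.le p hp
  simp only [mem_product, mem_range]
  omega

theorem arcSystems_zero (N : ℕ) : arcSystems N 0 = {∅} := by
  ext S
  rw [mem_arcSystems, card_eq_zero, mem_singleton, and_iff_right_iff_imp]
  rintro rfl
  constructor <;> simp

theorem IsArcSystem.mono (hT : IsArcSystem N T) (hST : S ⊆ T) : IsArcSystem N S where
  add_two_le p hp := hT.add_two_le p (hST hp)
  le p hp := hT.le p (hST hp)
  not_interlace p hp q hq := hT.not_interlace p (hST hp) q (hST hq)

theorem Visible.mono {v : ℕ} (hv : Visible T v) (hST : S ⊆ T) : Visible S v :=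
  fun p hp => hv p (hST hp)

theorem visible_zero (S : Finset (ℕ × ℕ)) : Visible S 0 := fun _ _ h => Nat.not_lt_zero _ h.1

theorem visible_insert_iff {p : ℕ × ℕ} {v : ℕ} :
    Visible (insert p S) v ↔ ¬ (p.1 < v ∧ v < p.2) ∧ Visible S v :=
  forall_mem_insert _ _ _

theorem isArcSystem_iff_visible (hS : IsArcSystem (N + 1) S) : IsArcSystem N S ↔ Visible S N := by
  refine ⟨fun h p hp hv => absurd (h.le p hp) (by omega),
    fun h => ⟨hS.add_two_le, fun p hp => ?_, hS.not_interlace⟩⟩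
  have hp_short := hS.add_two_le p hp
  have hp_le := hS.le p hp
  have hp_hides := h p hp
  omega

theorem IsArcSystem.succ (hS : IsArcSystem N S) : IsArcSystem (N + 1) S :=
  ⟨hS.add_two_le, fun p hp => (hS.le p hp).trans N.le_succ, hS.not_interlace⟩

theorem IsArcSystem.exists_outermost (hS : IsArcSystem (N + 1) S) (hN : ¬ Visible S N) :
    ∃ u, (u, N + 1) ∈ S ∧ Visible S u := by
  have hends : ∃ u, (u, N + 1) ∈ S := by
    simp only [Visible, not_forall, not_not] at hN
    obtain ⟨⟨i, j⟩, hp, -, hj⟩ := hN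
    obtain rfl : j = N + 1 := le_antisymm (hS.le _ hp) hj
    exact ⟨i, hp⟩
  -- The longest arc ending at `N + 1` works.
  refine ⟨Nat.find hends, Nat.find_spec hends, ?_⟩
  rintro ⟨i, j⟩ hp ⟨hi, hj⟩
  rcases (hS.le _ hp).eq_or_lt with rfl | hlt
  · exact Nat.find_min hends hi hp
  · exact hS.not_interlace _ hp _ (Nat.find_spec hends) ⟨hi, hj, hlt⟩

theorem width_eq_width_add_one (huM : u < M) (hmem : (u, M) ∈ S) (hu : Visible S u) :
    width S M = width S u + 1 := by
  obtain ⟨k, rfl⟩ := Nat.exists_eq_add_of_lt huM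
  have hhidden : Nat.count (fun m => Visible S (u + 1 + m)) k = 0 :=
    Nat.count_iff_forall_not.2 fun m hm h => h _ hmem (by dsimp only; omega)
  rw [width, show u + k + 1 = u + 1 + k by ring, Nat.count_add, hhidden,
    Nat.count_succ_eq_succ_count_iff.2 hu, width]

theorem width_insert (S : Finset (ℕ × ℕ)) (u M : ℕ) :
    width (insert (u, M) S) u = width S u := by
  refine le_antisymm (Nat.count_mono_left fun v _ h => (visible_insert_iff.1 h).2)
    (Nat.count_mono_left fun v hv h => visible_insert_iff.2 ⟨fun hlt => ?_, h⟩)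
  exact hlt.1.not_gt hv

theorem two_le_width_iff (hN : 2 ≤ N) (hS : IsArcSystem N S) :
    2 ≤ width S N ↔ (0, N) ∉ S := by
  obtain ⟨K, rfl⟩ := Nat.exists_eq_add_of_le' hN
  constructor
  · intro hw hmem
    have hone := width_eq_width_add_one (by omega) hmem (visible_zero S)
    simp only [width, Nat.count_zero] at hone hw
    omega
  · intro hmem
    obtain ⟨v, hv0, hvN, hv⟩ : ∃ v, 0 < v ∧ v < K + 2 ∧ Visible S v := by
      by_cases hlast : Visible S (K + 1)
      · exact ⟨K + 1, by omega, by omega, hlast⟩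
      · obtain ⟨u, hu_mem, hu⟩ := hS.exists_outermost hlast
        have hu_short := hS.add_two_le _ hu_mem
        refine ⟨u, Nat.pos_of_ne_zero fun h => hmem (h ▸ hu_mem), ?_, hu⟩
        dsimp only at hu_short
        omega
    have hlt_v := Nat.count_strict_mono (visible_zero S) hv0
    have hlt_N := Nat.count_strict_mono hv hvN
    rw [width]
    omega

theorem IsArcSystem.infinite_visible (hS : IsArcSystem N S) :
    (Set.ofPred (Visible S)).Infinite :=
  (Set.Ici_infinite N).mono fun _ hv p hp h => (h.2.trans_le (hS.le p hp)).not_ge hv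

theorem IsArcSystem.visible_nth (hS : IsArcSystem N S) (r : ℕ) :
    Visible S (Nat.nth (Visible S) r) :=
  Nat.nth_mem_of_infinite hS.infinite_visible r

theorem IsArcSystem.width_nth (hS : IsArcSystem N S) (r : ℕ) :
    width S (Nat.nth (Visible S) r) = r :=
  Nat.count_nth_of_infinite hS.infinite_visible r

theorem IsArcSystem.insert_arc (hS : IsArcSystem N S) (hu : Visible S u) (huN : u + 2 ≤ N) :
    IsArcSystem N (insert (u, N) S) where
  add_two_le := (forall_mem_insert _ _ _).2 ⟨huN, hS.add_two_le⟩
  le := (forall_mem_insert _ _ _).2 ⟨le_rfl, hS.le⟩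
  not_interlace := by
    have hu_left : ∀ q ∈ S, ¬ Interlace (u, N) q := fun q hq h => h.2.2.not_ge (hS.le q hq)
    have hu_right : ∀ p ∈ S, ¬ Interlace p (u, N) := fun p hp h => hu p hp ⟨h.1, h.2.1⟩
    simp only [forall_mem_insert]
    exact ⟨⟨fun h => h.1.false, hu_left⟩, fun p hp => ⟨hu_right p hp, hS.not_interlace p hp⟩⟩

theorem nth_visible_add_two_le (hS : IsArcSystem N S) (hw : r + 2 ≤ width S N) :
    Nat.nth (Visible S) r + 2 ≤ N := by
  have hlt : Nat.nth (Visible S) (r + 1) < N := Nat.nth_lt_of_lt_count hw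
  have hstep := Nat.nth_strictMono hS.infinite_visible (Nat.lt_add_one r)
  omega

theorem notMem_of_add_two_le_width (huN : u < N) (hu : Visible S u)
    (hw : width S u + 2 ≤ width S N) : (u, N) ∉ S := fun hmem => by
  have hw' := width_eq_width_add_one huN hmem hu
  omega

theorem visible_insert_self (hu : Visible S u) : Visible (insert (u, M) S) u :=
  visible_insert_iff.2 ⟨fun h => h.1.false, hu⟩

theorem nth_visible_eq (hu : Visible S u) (hw : width S u = r) : Nat.nth (Visible S) r = u :=
  hw ▸ Nat.nth_count hu

theorem width_erase (hmem : (u, M) ∈ S) : width (S.erase (u, M)) u = width S u := by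
  rw [← width_insert (S.erase (u, M)) u M, insert_erase hmem]

theorem IsArcSystem.width_add_two_le_width_erase (hS : IsArcSystem (N + 1) S)
    (hmem : (u, N + 1) ∈ S) (hu : Visible S u) :
    width S u + 2 ≤ width (S.erase (u, N + 1)) (N + 1) := by
  have hshort := hS.add_two_le _ hmem
  dsimp only at hshort
  have hu' := hu.mono (erase_subset (u, N + 1) S)
  obtain ⟨v, huv, hvN, hv⟩ :
      ∃ v, u < v ∧ v < N + 1 ∧ Visible (S.erase (u, N + 1)) v := by
    by_cases hlast : Visible (S.erase (u, N + 1)) N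
    · exact ⟨N, by omega, by omega, hlast⟩
    · have hS' := hS.mono (erase_subset (u, N + 1) S)
      obtain ⟨v, hv_mem, hv⟩ := hS'.exists_outermost hlast
      have hv_ne : v ≠ u := fun h => notMem_erase (u, N + 1) S (h ▸ hv_mem)
      have hv_short := hS'.add_two_le _ hv_mem
      have hv_not_over := hu' _ hv_mem
      dsimp only at hv_short hv_not_over
      exact ⟨v, by omega, by omega, hv⟩
  have hlt_v := Nat.count_strict_mono hu' huv
  have hlt_N := Nat.count_strict_mono hv hvN
  rw [← width_erase hmem]
  simp only [width]
  omega

theorem IsArcSystem.nth_visible_mem (hS : IsArcSystem (N + 1) S) (hN : ¬ Visible S N)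
    (hw : width S (N + 1) = r + 1) : (Nat.nth (Visible S) r, N + 1) ∈ S := by
  obtain ⟨u, hmem, hu⟩ := hS.exists_outermost hN
  have hshort := hS.add_two_le _ hmem
  have hw_u := width_eq_width_add_one (by dsimp only at hshort; omega) hmem hu
  rwa [nth_visible_eq hu (by omega)]

/-- Covering the outer boundary from its `r`-th visible point on by a new arc ending at `N + 1`
leaves `r + 1` edges; removing the longest arc ending at `N + 1` undoes this. -/
theorem card_filter_width_eq_not_visible (N r d : ℕ) :
    #{S ∈ arcSystems (N + 1) (d + 1) | width S (N + 1) = r + 1 ∧ ¬ Visible S N} =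
      wideCount (N + 1) (r + 2) d := by
  symm
  refine card_nbij' (fun S => insert (Nat.nth (Visible S) r, N + 1) S)
    (fun S => S.erase (Nat.nth (Visible S) r, N + 1)) ?_ ?_ ?_ ?_ <;>
    intro S hS <;>
    simp only [coe_filter, Set.mem_ofPred_eq, mem_arcSystems] at hS ⊢ <;>
    obtain ⟨⟨hS, hcard⟩, hw⟩ := hS
  · have hshort := nth_visible_add_two_le hS hw
    have hu := hS.visible_nth r
    have hw_u := hS.width_nth r
    have hnotMem := notMem_of_add_two_le_width (by omega) hu (hw_u.symm ▸ hw)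
    have hmem := mem_insert_self (Nat.nth (Visible S) r, N + 1) S
    refine ⟨⟨hS.insert_arc hu hshort, by rw [card_insert_of_notMem hnotMem, hcard]⟩, ?_,
      fun hN => hN _ hmem (by dsimp only; omega)⟩
    rw [width_eq_width_add_one (by omega) hmem (visible_insert_self hu), width_insert, hw_u]
  · have hmem := hS.nth_visible_mem hw.2 hw.1
    refine ⟨⟨hS.mono (erase_subset _ _), by rw [card_erase_of_mem hmem, hcard]; rfl⟩, ?_⟩
    simpa only [hS.width_nth] using hS.width_add_two_le_width_erase hmem (hS.visible_nth r)
  · have hshort := nth_visible_add_two_le hS hw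
    have hu := hS.visible_nth r
    have hw_u := hS.width_nth r
    rw [nth_visible_eq (visible_insert_self hu) ((width_insert _ _ _).trans hw_u)]
    exact erase_insert (notMem_of_add_two_le_width (by omega) hu (hw_u.symm ▸ hw))
  · have hmem := hS.nth_visible_mem hw.2 hw.1
    have hu := (hS.visible_nth r).mono (erase_subset (Nat.nth (Visible S) r, N + 1) S)
    rw [nth_visible_eq hu ((width_erase hmem).trans (hS.width_nth r)), insert_erase hmem]

theorem card_filter_width_eq_visible (N r d : ℕ) :
    #{S ∈ arcSystems (N + 1) d | width S (N + 1) = r + 1 ∧ Visible S N} =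
      #{S ∈ arcSystems N d | width S N = r} := by
  congr 1
  ext S
  simp only [mem_filter, mem_arcSystems]
  constructor
  · rintro ⟨⟨hS, hcard⟩, hw, hN⟩
    rw [width, Nat.count_succ_eq_succ_count_iff.2 hN, Nat.add_right_cancel_iff] at hw
    exact ⟨⟨(isArcSystem_iff_visible hS).2 hN, hcard⟩, hw⟩
  · rintro ⟨⟨hS, hcard⟩, hw⟩
    have hN := (isArcSystem_iff_visible hS.succ).1 hS
    refine ⟨⟨hS.succ, hcard⟩, ?_, hN⟩
    rw [width, Nat.count_succ_eq_succ_count_iff.2 hN, ← width, hw]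

theorem card_filter_width_eq_add_wideCount (N r d : ℕ) :
    #{S ∈ arcSystems N d | width S N = r} + wideCount N (r + 1) d = wideCount N r d := by
  rw [wideCount, wideCount, ← card_union_of_disjoint, ← filter_or]
  · congr 1
    exact filter_congr fun S _ => by omega
  · exact disjoint_filter.2 fun S _ h h' => by omega

theorem wideCount_recurrence (N r d : ℕ) :
    wideCount (N + 1) (r + 1) (d + 1) + wideCount N (r + 1) (d + 1) =
      wideCount (N + 1) (r + 2) (d + 1) + wideCount N r (d + 1) +
        wideCount (N + 1) (r + 2) d := by
  have hsplit := card_filter_add_card_filter_not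
    (s := {S ∈ arcSystems (N + 1) (d + 1) | width S (N + 1) = r + 1}) (fun S => Visible S N)
  simp only [filter_filter] at hsplit
  rw [card_filter_width_eq_visible, card_filter_width_eq_not_visible] at hsplit
  have hnew : _ + wideCount (N + 1) (r + 2) (d + 1) = _ :=
    card_filter_width_eq_add_wideCount (N + 1) (r + 1) (d + 1)
  have hold := card_filter_width_eq_add_wideCount N r (d + 1)
  omega

theorem wideCount_zero_right (hr : r ≤ N) : wideCount N r 0 = 1 := by
  have hwidth : width ∅ N = N := Nat.count_of_forall fun v _ p hp => absurd hp (notMem_empty p)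
  rw [wideCount, arcSystems_zero, filter_singleton, hwidth, if_pos hr, card_singleton]

theorem wideCount_self_succ (N d : ℕ) : wideCount N N (d + 1) = 0 := by
  rw [wideCount, card_eq_zero, filter_eq_empty_iff]
  intro S hS hw
  obtain ⟨hS, hcard⟩ := mem_arcSystems.1 hS
  obtain ⟨p, hp⟩ := card_pos.1 (hcard.symm ▸ d.succ_pos : 0 < #S)
  have hshort := hS.add_two_le p hp
  have hle := hS.le p hp
  have hall := Nat.count_iff_forall.1 (le_antisymm (Nat.count_le (p := Visible S)) hw)
  exact hall (p.1 + 1) (by omega) p hp (by omega)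

theorem wideCount_one (N d : ℕ) : wideCount (N + 1) 1 d = wideCount (N + 1) 0 d := by
  refine congrArg card (filter_congr fun S _ => iff_of_true ?_ (Nat.zero_le _))
  exact (Nat.zero_le _).trans_lt (Nat.count_strict_mono (visible_zero S) N.succ_pos)

theorem wideCount_one_succ (N d : ℕ) :
    wideCount (N + 2) 1 (d + 1) = wideCount (N + 2) 2 (d + 1) + wideCount (N + 2) 2 d := by
  have hrec : wideCount (N + 2) 1 (d + 1) + wideCount (N + 1) 1 (d + 1) =
      wideCount (N + 2) 2 (d + 1) + wideCount (N + 1) 0 (d + 1) + wideCount (N + 2) 2 d :=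
    wideCount_recurrence (N + 1) 0 d
  rw [wideCount_one N] at hrec
  omega

theorem cast_choose_succ_succ (a b : ℕ) :
    ((a + 1).choose (b + 1) : ℚ) = (a + 1) / (b + 1) * a.choose b := by
  rw [div_mul_eq_mul_div, eq_div_iff (by positivity)]
  exact_mod_cast (Nat.add_one_mul_choose_eq a b).symm

theorem cast_choose_succ_right (a b : ℕ) :
    (a.choose (b + 1) : ℚ) = (a - b) / (b + 1) * a.choose b := by
  have hpascal : ((a + 1).choose (b + 1) : ℚ) = a.choose b + a.choose (b + 1) :=
    mod_cast Nat.choose_succ_succ' a b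
  rw [cast_choose_succ_succ] at hpascal
  field_simp at hpascal ⊢
  linear_combination -hpascal

/-- The closed form of `wideCount (r + m + 1) (r + 1) d`. -/
def wideFormula (r m d : ℕ) : ℚ :=
  (r + m + 1 + r * d) / ((r + m + 1) * (d + 1)) * (r + m + d).choose d * m.choose d

theorem wideFormula_zero_succ (m d : ℕ) :
    wideFormula 0 (m + 1) (d + 1) = wideFormula 1 m (d + 1) + wideFormula 1 m d := by
  simp only [wideFormula]
  rw [show 0 + (m + 1) + (d + 1) = (m + d + 1) + 1 by ring,
    show 1 + m + (d + 1) = (m + d + 1) + 1 by ring, show 1 + m + d = m + d + 1 by ring,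
    cast_choose_succ_succ m, cast_choose_succ_succ, cast_choose_succ_right m]
  push_cast
  field_simp
  ring

theorem wideFormula_recurrence (r m d : ℕ) :
    wideFormula (r + 1) (m + 1) (d + 1) + wideFormula (r + 1) m (d + 1) =
      wideFormula (r + 2) m (d + 1) + wideFormula r (m + 1) (d + 1) +
        wideFormula (r + 2) m d := by
  simp only [wideFormula]
  rw [show r + 1 + (m + 1) + (d + 1) = (r + m + d + 2) + 1 by ring,
    show r + 2 + m + (d + 1) = (r + m + d + 2) + 1 by ring,
    show r + 1 + m + (d + 1) = r + m + d + 2 by ring,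
    show r + (m + 1) + (d + 1) = r + m + d + 2 by ring,
    show r + 2 + m + d = r + m + d + 2 by ring,
    cast_choose_succ_succ m, cast_choose_succ_succ (r + m + d + 2),
    cast_choose_succ_right m, cast_choose_succ_right (r + m + d + 2)]
  push_cast
  field_simp
  ring

theorem wideCount_eq_wideFormula (r m d : ℕ) (hN : N = r + m + 1) :
    (wideCount N (r + 1) d : ℚ) = wideFormula r m d := by
  induction d generalizing N r m with
  | zero =>
    have hpos : (r : ℚ) + m + 1 ≠ 0 := by positivity
    simp [wideCount_zero_right (show r + 1 ≤ N by omega), wideFormula, hpos]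
  | succ d ihd =>
    induction m generalizing N r with
    | zero => simp [hN, wideCount_self_succ, wideFormula]
    | succ m ihm =>
      induction r generalizing N with
      | zero =>
        obtain rfl : N = m + 2 := by omega
        rw [zero_add, wideCount_one_succ, Nat.cast_add, ihm 1 (by omega), ihd 1 m (by omega),
          wideFormula_zero_succ]
      | succ r ihr =>
        obtain rfl : N = r + m + 2 + 1 := by omega
        have hrec := congrArg (Nat.cast (R := ℚ)) (wideCount_recurrence (r + m + 2) (r + 1) d)
        push_cast at hrec
        rw [ihm (r + 1) (show r + m + 2 = _ by ring), ihm (r + 2) (by ring), ihr (by ring),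
          ihd (r + 2) m (by ring), ← wideFormula_recurrence] at hrec
        exact add_right_cancel hrec

/-- The chord of the `n`-gon joining the vertices `x.1` and `x.2`; a coordinate `≥ n` is
ignored. -/
def chord (n : ℕ) (x : ℕ × ℕ) : Finset (Fin n) :=
  {v | (v : ℕ) = x.1 ∨ (v : ℕ) = x.2}

theorem chord_coe {n : ℕ} (i j : Fin n) : chord n (i, j) = {i, j} := by
  ext v
  simp [chord, Fin.ext_iff]

theorem chord_injOn (n : ℕ) : Set.InjOn (chord n) {x | x.1 < x.2 ∧ x.2 < n} := by
  rintro ⟨i, j⟩ ⟨hij, hj⟩ ⟨k, l⟩ ⟨hkl, hl⟩ h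
  dsimp only at hij hj hkl hl
  have hmem (v : Fin n) : (v : ℕ) = i ∨ (v : ℕ) = j ↔ (v : ℕ) = k ∨ (v : ℕ) = l := by
    simpa [chord] using Finset.ext_iff.1 h v
  have hi := hmem ⟨i, by omega⟩
  have hj' := hmem ⟨j, by omega⟩
  have hk := hmem ⟨k, by omega⟩
  dsimp only at hi hj' hk
  ext <;> dsimp only <;> omega

theorem not_cycAdj_iff {i j : Fin (N + 1)} (hij : i < j) :
    ¬ cycAdj (N + 1) i j ↔ (i : ℕ) + 2 ≤ j ∧ ((i : ℕ), (j : ℕ)) ≠ (0, N) := by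
  have hi : ((i : ℕ) + 1) % (N + 1) = i + 1 := Nat.mod_eq_of_lt (by omega)
  rw [cycAdj, hi, Ne, Prod.mk.injEq]
  rcases (Nat.le_of_lt_succ j.isLt).eq_or_lt with hj | hj
  · rw [hj, Nat.mod_self]
    omega
  · rw [Nat.mod_eq_of_lt (by omega)]
    omega

theorem cycAdj_comm {n : ℕ} {i j : Fin n} : cycAdj n i j ↔ cycAdj n j i := or_comm

theorem isDiagonal_iff {p : Finset (Fin (N + 1))} : IsDiagonal (N + 1) p ↔
    ∃ x : ℕ × ℕ, (x.1 + 2 ≤ x.2 ∧ x.2 ≤ N ∧ x ≠ (0, N)) ∧ chord (N + 1) x = p := by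
  constructor
  · rintro ⟨i, j, hij, hadj, rfl⟩
    wlog hlt : i < j generalizing i j
    · rw [pair_comm]
      exact this j i hij.symm (cycAdj_comm.not.1 hadj) (hij.symm.lt_of_le (not_lt.1 hlt))
    have h := (not_cycAdj_iff hlt).1 hadj
    exact ⟨(i, j), ⟨h.1, Nat.le_of_lt_succ j.isLt, h.2⟩, chord_coe i j⟩
  · rintro ⟨⟨i, j⟩, ⟨hij, hj, hne⟩, rfl⟩
    lift i to Fin (N + 1) using by dsimp only at hij hj; omega
    lift j to Fin (N + 1) using Nat.lt_succ_of_le hj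
    have hlt : i < j := by dsimp only at hij; omega
    exact ⟨i, j, hlt.ne, (not_cycAdj_iff hlt).2 ⟨hij, hne⟩, chord_coe i j⟩

theorem cross_chord_iff {n : ℕ} {x y : ℕ × ℕ} (hx : x.1 < x.2 ∧ x.2 < n)
    (hy : y.1 < y.2 ∧ y.2 < n) :
    Cross n (chord n x) (chord n y) ↔ Interlace x y ∨ Interlace y x := by
  have eq_of_chord_eq {z : ℕ × ℕ} {a b : Fin n} (hz : z.1 < z.2 ∧ z.2 < n) (hab : a < b)
      (h : chord n z = {a, b}) : z = ((a : ℕ), (b : ℕ)) :=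
    chord_injOn n hz ⟨hab, b.isLt⟩ (h.trans (chord_coe a b).symm)
  constructor
  · rintro ⟨a, b, c, d, hac, hcb, hbd, ⟨hxab, hycd⟩ | ⟨hxcd, hyab⟩⟩
    · rw [eq_of_chord_eq hx (hac.trans hcb) hxab, eq_of_chord_eq hy (hcb.trans hbd) hycd]
      exact Or.inl ⟨hac, hcb, hbd⟩
    · rw [eq_of_chord_eq hx (hcb.trans hbd) hxcd, eq_of_chord_eq hy (hac.trans hcb) hyab]
      exact Or.inr ⟨hac, hcb, hbd⟩
  · obtain ⟨i, j⟩ := x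
    obtain ⟨k, l⟩ := y
    dsimp only at hx hy
    lift i to Fin n using hx.1.trans hx.2
    lift j to Fin n using hx.2
    lift k to Fin n using hy.1.trans hy.2
    lift l to Fin n using hy.2
    simp only [chord_coe]
    rintro (⟨hik, hkj, hjl⟩ | ⟨hki, hil, hlj⟩)
    · exact ⟨i, j, k, l, hik, hkj, hjl, Or.inl ⟨rfl, rfl⟩⟩
    · exact ⟨k, l, i, j, hki, hil, hlj, Or.inr ⟨rfl, rfl⟩⟩

theorem pairwise_not_cross_image_chord_iff {n : ℕ} (hT : ∀ x ∈ T, x.1 < x.2 ∧ x.2 < n) :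
    (T.image (chord n) : Set (Finset (Fin n))).Pairwise (fun p q => ¬ Cross n p q) ↔
      ∀ x ∈ T, ∀ y ∈ T, ¬ Interlace x y := by
  rw [coe_image, ((chord_injOn n).mono hT).pairwise_image]
  constructor
  · intro h x hx y hy hxy
    exact h hx hy (fun heq => hxy.1.ne (congrArg Prod.fst heq))
      ((cross_chord_iff (hT x hx) (hT y hy)).2 (Or.inl hxy))
  · intro h x hx y hy _ hcross
    exact ((cross_chord_iff (hT x hx) (hT y hy)).1 hcross).elim (h x hx y hy) (h y hy x hx)

theorem IsArcSystem.lt_and_lt (hT : IsArcSystem N T) :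
    ∀ x ∈ T, x.1 < x.2 ∧ x.2 < N + 1 := fun x hx =>
  ⟨(Nat.le_succ _).trans_lt (hT.add_two_le x hx), Nat.lt_succ_of_le (hT.le x hx)⟩

theorem mem_image_arcSystems_iff {U : Finset (Finset (Fin (N + 1)))} :
    U ∈ {T ∈ arcSystems N d | (0, N) ∉ T}.image (image (chord (N + 1))) ↔
      #U = d ∧ (∀ p ∈ U, IsDiagonal (N + 1) p) ∧
        (U : Set (Finset (Fin (N + 1)))).Pairwise fun p q => ¬ Cross (N + 1) p q := by
  simp only [mem_image, mem_filter, mem_arcSystems]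
  constructor
  · rintro ⟨T, ⟨⟨hT, rfl⟩, h0⟩, rfl⟩
    refine ⟨card_image_of_injOn ((chord_injOn _).mono hT.lt_and_lt),
      forall_mem_image.2 fun x hx => isDiagonal_iff.2 ⟨x, ?_, rfl⟩,
      (pairwise_not_cross_image_chord_iff hT.lt_and_lt).2 hT.not_interlace⟩
    exact ⟨hT.add_two_le x hx, hT.le x hx, fun h => h0 (h ▸ hx)⟩
  · rintro ⟨rfl, hdiag, hcross⟩
    obtain ⟨T, hT_arc, rfl⟩ := subset_set_image_iff.1 fun p hp => isDiagonal_iff.1 (hdiag p hp)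
    have hT_lt : ∀ x ∈ T, x.1 < x.2 ∧ x.2 < N + 1 := fun x hx =>
      ⟨(Nat.le_succ _).trans_lt (hT_arc hx).1, Nat.lt_succ_of_le (hT_arc hx).2.1⟩
    have hT : IsArcSystem N T :=
      ⟨fun x hx => (hT_arc hx).1, fun x hx => (hT_arc hx).2.1,
        (pairwise_not_cross_image_chord_iff hT_lt).1 hcross⟩
    have hcard := card_image_of_injOn ((chord_injOn _).mono hT_lt)
    exact ⟨T, ⟨⟨hT, hcard.symm⟩, fun h => (hT_arc h).2.2 rfl⟩, rfl⟩

theorem image_chord_injOn (N : ℕ) :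
    Set.InjOn (image (chord (N + 1))) {T | IsArcSystem N T} := by
  intro T hT U hU h
  rw [← coe_inj, coe_image, coe_image] at h
  exact coe_injective <|
    ((chord_injOn (N + 1)).image_eq_image_iff hT.lt_and_lt hU.lt_and_lt).1 h

theorem card_noncrossing_diagonals (hN : 2 ≤ N) (d : ℕ) :
    Nat.card {U : Finset (Finset (Fin (N + 1))) //
        #U = d ∧ (∀ p ∈ U, IsDiagonal (N + 1) p) ∧
        (U : Set (Finset (Fin (N + 1)))).Pairwise fun p q => ¬ Cross (N + 1) p q} =
      wideCount N 2 d := by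
  rw [Nat.subtype_card _ fun _ => mem_image_arcSystems_iff, card_image_of_injOn, wideCount]
  · refine congrArg card (filter_congr fun T hT => ?_)
    exact (two_le_width_iff hN (mem_arcSystems.1 hT).1).symm
  · exact (image_chord_injOn N).mono fun T hT => (mem_arcSystems.1 (mem_filter.1 hT).1).1

theorem wideFormula_one (m d : ℕ) : wideFormula 1 m d =
    1 / (m + 3 + d) * (m + 3 + d).choose (d + 1) * m.choose d := by
  have hratio := cast_choose_succ_succ (m + d + 1) d
  rw [cast_choose_succ_right] at hratio
  rw [wideFormula, show m + 3 + d = m + d + 1 + 1 + 1 by ring, cast_choose_succ_succ,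
    show 1 + m + d = m + d + 1 by ring]
  push_cast at hratio ⊢
  field_simp at hratio ⊢
  linear_combination -((m : ℚ) + d + 3) * (m.choose d : ℚ) * hratio

end

theorem noncrossing_diagonal_count_general (n d : ℕ) (hn : 3 ≤ n) :
    (Nat.card {S : Finset (Finset (Fin n)) //
        S.card = d ∧ (∀ p ∈ S, IsDiagonal n p) ∧
        (S : Set (Finset (Fin n))).Pairwise fun p q => ¬ Cross n p q} : ℚ) =
      (1 / ((n : ℚ) + d)) * ((n + d).choose (d + 1)) * ((n - 3).choose d) := by
  obtain ⟨m, rfl⟩ := Nat.exists_eq_add_of_le' hn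
  rw [card_noncrossing_diagonals (by omega), wideCount_eq_wideFormula 1 m d (by omega),
    wideFormula_one, Nat.add_sub_cancel, Nat.cast_add m 3, Nat.cast_ofNat]

/-- For `n ≥ 4` and `d ≤ n - 3`, the number of ways to choose `d` pairwise non-crossing
diagonals of a convex `n`-gon equals `(1/(n+d)) * C(n+d, d+1) * C(n-3, d)`. -/
theorem noncrossing_diagonal_count (n d : ℕ) (hn : 4 ≤ n) (hd : d ≤ n - 3) :
    (Nat.card {S : Finset (Finset (Fin n)) //
        S.card = d ∧ (∀ p ∈ S, IsDiagonal n p) ∧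
        (S : Set (Finset (Fin n))).Pairwise fun p q => ¬ Cross n p q} : ℚ) =
      (1 / ((n : ℚ) + d)) * ((n + d).choose (d + 1)) * ((n - 3).choose d) :=
  noncrossing_diagonal_count_general n d (by omega)
end

section
/- For n ≥ 5 and 1 ≤ d ≤ n-3, the number of standard Young tableaux of shape (d+1, 2, 1^(n-d-3)) equals C(n, d+1) · d(n-d-2)/(n-1). -/
/-- `c = (i, j)` is a cell of the Young diagram with row lengths `shape`
(row `i`, column `j`, both `0`-indexed). -/
def IsCell (shape : List ℕ) (c : ℕ × ℕ) : Prop := c.2 < shape.getD c.1 0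

/-- `T` is a standard Young tableau of shape `shape`: it vanishes off the diagram,
its entries on the diagram are a filling by the distinct values `1, …, N`
(`N` the number of boxes), and entries increase along rows and down columns. -/
def IsSYT (shape : List ℕ) (T : ℕ × ℕ → ℕ) : Prop :=
  (∀ c, ¬ IsCell shape c → T c = 0) ∧
  (∀ c, IsCell shape c → 1 ≤ T c ∧ T c ≤ shape.sum) ∧
  (∀ c c', IsCell shape c → IsCell shape c' → T c = T c' → c = c') ∧
  (∀ i j, IsCell shape (i, j + 1) → T (i, j) < T (i, j + 1)) ∧
  (∀ i j, IsCell shape (i + 1, j) → T (i, j) < T (i + 1, j))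

/-- The number of standard Young tableaux of shape `shape`. -/
noncomputable def sytCount (shape : List ℕ) : ℕ :=
  Nat.card {T : ℕ × ℕ → ℕ // IsSYT shape T}

/-!
Writing `a = d` and `b = n - d - 2`, the shape is the hook with arm `a` and leg `b` together with
the cell `(1, 1)`. The largest entry of a standard tableau sits in a corner, and deleting it leaves
a standard tableau of the remaining cells. For hooks this is Pascal's rule, so there are
`C(a + b, a)` tableaux. For near-hooks it says
`N a b = C(a + b, a) + N (a - 1) b + N a (b - 1)` with the second and third terms absent when
`a = 1`, respectively `b = 1`; with `n = a + b + 2` the solution is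
`N a b = n * C(n - 2, a) - C(n, a + 1)`.
This expression vanishes for `a = 0` and for `b = 0`, which accounts for the absent terms.
-/

open Finset Function

section LinearExtension

variable {α : Type*} {r : α → α → Prop} {S : Finset α} {T : α → ℕ} {c : α}

/-- `T` is a linear extension of the relation `r` on the finite set `S`, encoded as the numbering of
`S` by `1, …, #S` along which `r` increases, and extended by `0` outside `S`. -/
structure IsLinearExtension (r : α → α → Prop) (S : Finset α) (T : α → ℕ) : Prop where
  eq_zero_of_notMem : ∀ x ∉ S, T x = 0
  mapsTo : Set.MapsTo T S (Icc 1 #S)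
  injOn : Set.InjOn T S
  lt_of_rel : ∀ x ∈ S, ∀ y ∈ S, r x y → T x < T y

/-- The number of linear extensions of the relation `r` on the finite set `S`. -/
noncomputable def numLinearExtensions (r : α → α → Prop) (S : Finset α) : ℕ :=
  {T | IsLinearExtension r S T}.ncard

open scoped Classical in
/-- The elements of `S` with no `r`-successor in `S`: the possible positions of the largest label
of a linear extension. -/
noncomputable def sinks (r : α → α → Prop) (S : Finset α) : Finset α :=
  {c ∈ S | ∀ y ∈ S, ¬ r c y}

lemma mem_sinks : c ∈ sinks r S ↔ c ∈ S ∧ ∀ y ∈ S, ¬ r c y := by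
  classical exact mem_filter

namespace IsLinearExtension

lemma le_card (hT : IsLinearExtension r S T) (x : α) : T x ≤ #S := by
  by_cases hx : x ∈ S
  · exact (mem_Icc.1 (hT.mapsTo hx)).2
  · simp [hT.eq_zero_of_notMem x hx]

lemma exists_mem_sinks_eq_card (hT : IsLinearExtension r S T) (hS : S.Nonempty) :
    ∃ c ∈ sinks r S, T c = #S := by
  have hsurj : Set.SurjOn T S (Icc 1 #S) :=
    surjOn_of_injOn_of_card_le T hT.mapsTo hT.injOn (by simp)
  obtain ⟨c, hc, hTc⟩ := hsurj (mem_coe.2 (right_mem_Icc.2 hS.card_pos))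
  refine ⟨c, mem_sinks.2 ⟨hc, fun y hy hcy => ?_⟩, hTc⟩
  exact (hT.lt_of_rel c hc y hy hcy).not_ge (hTc ▸ hT.le_card y)

lemma lt_of_rel_of_mem_right {x y : α} (hT : IsLinearExtension r S T) (hy : y ∈ S) (hxy : r x y) :
    T x < T y := by
  by_cases hx : x ∈ S
  · exact hT.lt_of_rel x hx y hy hxy
  · rw [hT.eq_zero_of_notMem x hx]
    exact (mem_Icc.1 (hT.mapsTo hy)).1

variable [DecidableEq α]

lemma update_card (hT : IsLinearExtension r (S.erase c) T) (hc : c ∈ sinks r S) :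
    IsLinearExtension r S (update T c #S) := by
  obtain ⟨hcS, hsink⟩ := mem_sinks.1 hc
  have hlt : ∀ x, T x < #S := fun x =>
    (hT.le_card x).trans_lt (card_erase_lt_of_mem hcS)
  have hmem : ∀ {x}, x ∈ S → x ≠ c → x ∈ S.erase c := fun hx hxc => mem_erase.2 ⟨hxc, hx⟩
  refine ⟨fun x hx => ?_, fun x hx => ?_, fun x hx y hy hxy => ?_, fun x hx y hy hxy => ?_⟩
  · rw [update_of_ne (ne_of_mem_of_not_mem hcS hx).symm]
    exact hT.eq_zero_of_notMem x fun h => hx (mem_of_mem_erase h)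
  · obtain rfl | hxc := eq_or_ne x c
    · simpa using card_pos.2 ⟨x, hx⟩
    · have hIcc := mem_Icc.1 (hT.mapsTo (hmem hx hxc))
      simpa [hxc] using ⟨hIcc.1, (hlt x).le⟩
  · obtain rfl | hxc := eq_or_ne x c
    · by_contra hne
      simp [Ne.symm hne, (hlt y).ne'] at hxy
    · obtain rfl | hyc := eq_or_ne y c
      · simp [hxc, (hlt x).ne] at hxy
      · exact hT.injOn (hmem hx hxc) (hmem hy hyc) (by simpa [hxc, hyc] using hxy)
  · have hxc : x ≠ c := fun h => hsink y hy (h ▸ hxy)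
    rw [update_of_ne hxc]
    obtain rfl | hyc := eq_or_ne y c
    · simpa using hlt x
    · rw [update_of_ne hyc]
      exact hT.lt_of_rel x (hmem hx hxc) y (hmem hy hyc) hxy

lemma update_zero (hT : IsLinearExtension r S T) (hc : c ∈ S) (hTc : T c = #S) :
    IsLinearExtension r (S.erase c) (update T c 0) := by
  refine ⟨fun x hx => ?_, fun x hx => ?_, fun x hx y hy hxy => ?_, fun x hx y hy hxy => ?_⟩
  · obtain rfl | hxc := eq_or_ne x c
    · simp
    · rw [update_of_ne hxc]
      exact hT.eq_zero_of_notMem x fun h => hx (mem_erase.2 ⟨hxc, h⟩)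
  · obtain ⟨hxc, hxS⟩ := mem_erase.1 hx
    have hne : T x ≠ #S := fun h => hxc (hT.injOn hxS hc (h.trans hTc.symm))
    have hIcc := mem_Icc.1 (hT.mapsTo hxS)
    rw [update_of_ne hxc, coe_Icc, Set.mem_Icc, card_erase_of_mem hc]
    omega
  · obtain ⟨hxc, hxS⟩ := mem_erase.1 hx
    obtain ⟨hyc, hyS⟩ := mem_erase.1 hy
    exact hT.injOn hxS hyS (by simpa [hxc, hyc] using hxy)
  · obtain ⟨hxc, hxS⟩ := mem_erase.1 hx
    obtain ⟨hyc, hyS⟩ := mem_erase.1 hy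
    simpa [hxc, hyc] using hT.lt_of_rel x hxS y hyS hxy

end IsLinearExtension

lemma isLinearExtension_iff_exists_mem_sinks [DecidableEq α] (hS : S.Nonempty) :
    IsLinearExtension r S T ↔
      ∃ c ∈ sinks r S, ∃ T', IsLinearExtension r (S.erase c) T' ∧ update T' c #S = T := by
  constructor
  · intro hT
    obtain ⟨c, hc, hTc⟩ := hT.exists_mem_sinks_eq_card hS
    refine ⟨c, hc, _, hT.update_zero (mem_sinks.1 hc).1 hTc, ?_⟩
    rw [update_idem, ← hTc, update_eq_self]
  · rintro ⟨c, hc, T', hT', rfl⟩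
    exact hT'.update_card hc

lemma finite_setOf_isLinearExtension (r : α → α → Prop) (S : Finset α) :
    {T | IsLinearExtension r S T}.Finite := by
  refine Set.Finite.of_injOn (f := fun T (x : S) => T x) (t := {g : S → ℕ | ∀ x, g x ∈ Set.Iic #S})
    (fun T hT x => hT.le_card x) (fun T hT T' hT' h => ?_)
    (Set.Finite.pi' fun _ => Set.finite_Iic _)
  ext x
  by_cases hx : x ∈ S
  · exact congrFun h ⟨x, hx⟩
  · rw [hT.eq_zero_of_notMem x hx, hT'.eq_zero_of_notMem x hx]

lemma numLinearExtensions_empty (r : α → α → Prop) : numLinearExtensions r ∅ = 1 := by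
  refine Set.ncard_eq_one.2 ⟨0, Set.ext fun T => ⟨fun hT => ?_, ?_⟩⟩
  · exact funext fun x => hT.eq_zero_of_notMem x (notMem_empty x)
  · rintro rfl
    constructor <;> simp

lemma injOn_update_of_isLinearExtension_erase [DecidableEq α] (r : α → α → Prop) (S : Finset α)
    (c : α) (N : ℕ) : Set.InjOn (update · c N) {T | IsLinearExtension r (S.erase c) T} := by
  intro T hT T' hT' h
  ext x
  obtain rfl | hxc := eq_or_ne x c
  · rw [hT.eq_zero_of_notMem x (notMem_erase x S), hT'.eq_zero_of_notMem x (notMem_erase x S)]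
  · simpa [hxc] using congrFun h x

theorem numLinearExtensions_eq_sum_sinks [DecidableEq α] (r : α → α → Prop) (hS : S.Nonempty) :
    numLinearExtensions r S = ∑ c ∈ sinks r S, numLinearExtensions r (S.erase c) := by
  classical
  let extensions (S : Finset α) : Finset (α → ℕ) := (finite_setOf_isLinearExtension r S).toFinset
  have mem_extensions {S : Finset α} {T : α → ℕ} : T ∈ extensions S ↔ IsLinearExtension r S T := by
    simp [extensions]
  have card_extensions (S : Finset α) : numLinearExtensions r S = #(extensions S) :=
    Set.ncard_eq_toFinset_card _ _
  have extensions_eq :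
      extensions S =
        (sinks r S).biUnion fun c => (extensions (S.erase c)).image (update · c #S) := by
    ext T
    simp only [mem_biUnion, mem_image, mem_extensions, isLinearExtension_iff_exists_mem_sinks hS]
  rw [card_extensions, extensions_eq, card_biUnion]
  · refine sum_congr rfl fun c _ => ?_
    rw [card_extensions, card_image_of_injOn]
    exact (injOn_update_of_isLinearExtension_erase r S c #S).mono fun T hT => mem_extensions.1 hT
  · intro c hc c' hc' hne
    refine disjoint_left.2 fun T hT hT' => hne ?_
    obtain ⟨U, hU, rfl⟩ := mem_image.1 hT
    obtain ⟨U', -, hUU'⟩ := mem_image.1 hT'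
    refine ((mem_extensions.1 hU).update_card hc).injOn (mem_sinks.1 hc).1 (mem_sinks.1 hc').1 ?_
    rw [update_self, ← hUU', update_self]

end LinearExtension

section YoungDiagram

lemma isCell_iff_mem_cellsOfRowLens (w : List ℕ) (c : ℕ × ℕ) :
    IsCell w c ↔ c ∈ YoungDiagram.cellsOfRowLens w := by
  rw [IsCell, YoungDiagram.mem_cellsOfRowLens]
  by_cases h : c.1 < w.length <;> simp [h]

lemma card_cellsOfRowLens (w : List ℕ) : #(YoungDiagram.cellsOfRowLens w) = w.sum := by
  induction w with
  | nil => rfl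
  | cons k w ih =>
    rw [YoungDiagram.cellsOfRowLens, card_union_of_disjoint, card_map, ih]
    · simp
    · simp [disjoint_left]

lemma isSYT_iff_isLinearExtension (w : List ℕ) (T : ℕ × ℕ → ℕ) :
    IsSYT w T ↔ IsLinearExtension (· ⋖ ·) (YoungDiagram.cellsOfRowLens w) T := by
  simp only [IsSYT, isCell_iff_mem_cellsOfRowLens, ← card_cellsOfRowLens]
  constructor
  · rintro ⟨h0, hIcc, hinj, hrow, hcol⟩
    refine ⟨h0, fun c hc => mem_Icc.2 (hIcc c hc), fun c hc c' hc' => hinj c c' hc hc', ?_⟩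
    rintro ⟨i, j⟩ - ⟨k, l⟩ hkl hcov
    simp only [Prod.mk_covBy_mk_iff, Nat.covBy_iff_add_one_eq] at hcov
    obtain ⟨rfl, rfl⟩ | ⟨rfl, rfl⟩ := hcov
    · exact hcol i j hkl
    · exact hrow i j hkl
  · intro hT
    refine ⟨hT.eq_zero_of_notMem, fun c hc => mem_Icc.1 (hT.mapsTo hc),
      fun c c' hc hc' => hT.injOn hc hc', fun i j hij => ?_, fun i j hij => ?_⟩
    · exact hT.lt_of_rel_of_mem_right hij (Prod.mk_covBy_mk_iff_right.2 (Order.covBy_add_one j))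
    · exact hT.lt_of_rel_of_mem_right hij (Prod.mk_covBy_mk_iff_left.2 (Order.covBy_add_one i))

lemma sytCount_eq_numLinearExtensions (w : List ℕ) :
    sytCount w = numLinearExtensions (· ⋖ ·) (YoungDiagram.cellsOfRowLens w) := by
  simp only [sytCount, isSYT_iff_isLinearExtension]
  rfl

lemma mem_sinks_covBy {S : Finset (ℕ × ℕ)} {i j : ℕ} :
    (i, j) ∈ sinks (· ⋖ ·) S ↔ (i, j) ∈ S ∧ (i, j + 1) ∉ S ∧ (i + 1, j) ∉ S := by
  simp only [mem_sinks, Prod.forall, Prod.mk_covBy_mk_iff, Nat.covBy_iff_add_one_eq]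
  grind

end YoungDiagram

section Hook

/-- The cells of the hook with arm length `a` and leg length `b`. -/
def hookCells (a b : ℕ) : Finset (ℕ × ℕ) :=
  {c ∈ range (b + 1) ×ˢ range (a + 1) | c.1 = 0 ∨ c.2 = 0}

lemma mem_hookCells {a b i j : ℕ} :
    (i, j) ∈ hookCells a b ↔ i ≤ b ∧ j ≤ a ∧ (i = 0 ∨ j = 0) := by
  simp [hookCells, and_assoc]

lemma hookCells_nonempty (a b : ℕ) : (hookCells a b).Nonempty := ⟨(0, 0), by simp [mem_hookCells]⟩

lemma hookCells_succ_left_erase (a b : ℕ) :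
    (hookCells (a + 1) b).erase (0, a + 1) = hookCells a b := by
  ext ⟨i, j⟩
  simp only [mem_erase, mem_hookCells, ne_eq, Prod.mk.injEq]
  omega

lemma hookCells_succ_right_erase (a b : ℕ) :
    (hookCells a (b + 1)).erase (b + 1, 0) = hookCells a b := by
  ext ⟨i, j⟩
  simp only [mem_erase, mem_hookCells, ne_eq, Prod.mk.injEq]
  omega

lemma numLinearExtensions_hookCells_zero_left (b : ℕ) :
    numLinearExtensions (· ⋖ ·) (hookCells 0 b) = 1 := by
  have sinks_eq (b : ℕ) : sinks (· ⋖ ·) (hookCells 0 b) = {(b, 0)} := by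
    ext ⟨i, j⟩
    simp only [mem_sinks_covBy, mem_hookCells, mem_singleton, Prod.mk.injEq]
    omega
  induction b with
  | zero =>
    rw [numLinearExtensions_eq_sum_sinks _ (hookCells_nonempty _ _), sinks_eq, sum_singleton]
    exact numLinearExtensions_empty _
  | succ b ih =>
    rwa [numLinearExtensions_eq_sum_sinks _ (hookCells_nonempty _ _), sinks_eq, sum_singleton,
      hookCells_succ_right_erase]

lemma numLinearExtensions_hookCells_zero_right (a : ℕ) :
    numLinearExtensions (· ⋖ ·) (hookCells a 0) = 1 := by
  have sinks_eq (a : ℕ) : sinks (· ⋖ ·) (hookCells a 0) = {(0, a)} := by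
    ext ⟨i, j⟩
    simp only [mem_sinks_covBy, mem_hookCells, mem_singleton, Prod.mk.injEq]
    omega
  induction a with
  | zero => exact numLinearExtensions_hookCells_zero_left 0
  | succ a ih =>
    rwa [numLinearExtensions_eq_sum_sinks _ (hookCells_nonempty _ _), sinks_eq, sum_singleton,
      hookCells_succ_left_erase]

lemma numLinearExtensions_hookCells_succ_succ (a b : ℕ) :
    numLinearExtensions (· ⋖ ·) (hookCells (a + 1) (b + 1)) =
      numLinearExtensions (· ⋖ ·) (hookCells a (b + 1)) +
        numLinearExtensions (· ⋖ ·) (hookCells (a + 1) b) := by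
  have sinks_eq : sinks (· ⋖ ·) (hookCells (a + 1) (b + 1)) = {(0, a + 1), (b + 1, 0)} := by
    ext ⟨i, j⟩
    simp only [mem_sinks_covBy, mem_hookCells, mem_insert, mem_singleton, Prod.mk.injEq]
    omega
  rw [numLinearExtensions_eq_sum_sinks _ (hookCells_nonempty _ _), sinks_eq, sum_pair (by simp),
    hookCells_succ_left_erase, hookCells_succ_right_erase]

theorem numLinearExtensions_hookCells (a b : ℕ) :
    numLinearExtensions (· ⋖ ·) (hookCells a b) = (a + b).choose a := by
  induction a generalizing b with
  | zero => simp [numLinearExtensions_hookCells_zero_left]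
  | succ a iha =>
    induction b with
    | zero => simp [numLinearExtensions_hookCells_zero_right]
    | succ b ihb =>
      rw [numLinearExtensions_hookCells_succ_succ, iha, ihb, ← add_assoc (a + 1),
        Nat.choose_succ_succ']
      congr 2
      omega

end Hook

section NearHook

/-- The cells of the near-hook: the hook with arm length `a` and leg length `b`, together with the
cell `(1, 1)`. It is a Young diagram only for `a, b ≥ 1`. -/
def nearHookCells (a b : ℕ) : Finset (ℕ × ℕ) := insert (1, 1) (hookCells a b)

lemma nearHookCells_nonempty (a b : ℕ) : (nearHookCells a b).Nonempty := insert_nonempty _ _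

lemma nearHookCells_erase (a b : ℕ) : (nearHookCells a b).erase (1, 1) = hookCells a b :=
  erase_insert (by simp [mem_hookCells])

lemma nearHookCells_succ_left_erase (a b : ℕ) :
    (nearHookCells (a + 1) b).erase (0, a + 1) = nearHookCells a b := by
  rw [nearHookCells, erase_insert_of_ne (by simp), hookCells_succ_left_erase, nearHookCells]

lemma nearHookCells_succ_right_erase (a b : ℕ) :
    (nearHookCells a (b + 1)).erase (b + 1, 0) = nearHookCells a b := by
  rw [nearHookCells, erase_insert_of_ne (by simp), hookCells_succ_right_erase, nearHookCells]

lemma sinks_nearHookCells (a b : ℕ) :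
    sinks (· ⋖ ·) (nearHookCells (a + 1) (b + 1)) =
      {c ∈ ({(1, 1), (0, a + 1), (b + 1, 0)} : Finset (ℕ × ℕ)) |
        (c = (0, a + 1) → a ≠ 0) ∧ (c = (b + 1, 0) → b ≠ 0)} := by
  ext ⟨i, j⟩
  simp only [mem_sinks_covBy, nearHookCells, mem_hookCells, mem_filter, mem_insert, mem_singleton,
    Prod.mk.injEq]
  omega

lemma numLinearExtensions_nearHookCells_succ_succ (a b : ℕ) :
    numLinearExtensions (· ⋖ ·) (nearHookCells (a + 1) (b + 1)) =
      (a + 1 + (b + 1)).choose (a + 1) +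
        ((if a = 0 then 0 else numLinearExtensions (· ⋖ ·) (nearHookCells a (b + 1))) +
          if b = 0 then 0 else numLinearExtensions (· ⋖ ·) (nearHookCells (a + 1) b)) := by
  rw [numLinearExtensions_eq_sum_sinks _ (nearHookCells_nonempty _ _), sinks_nearHookCells,
    sum_filter, sum_insert (by simp), sum_pair (by simp), nearHookCells_erase,
    nearHookCells_succ_left_erase, nearHookCells_succ_right_erase, numLinearExtensions_hookCells]
  simp

theorem numLinearExtensions_nearHookCells_add_choose {a b : ℕ} (ha : a ≠ 0) (hb : b ≠ 0) :
    numLinearExtensions (· ⋖ ·) (nearHookCells a b) + (a + b + 2).choose (a + 1) =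
      (a + b + 2) * (a + b).choose a := by
  induction a generalizing b with
  | zero => contradiction
  | succ a iha =>
    induction b with
    | zero => contradiction
    | succ b ihb =>
      have arm : (if a = 0 then 0 else numLinearExtensions (· ⋖ ·) (nearHookCells a (b + 1))) +
          (a + b + 3).choose (a + 1) = (a + b + 3) * (a + b + 1).choose a := by
        obtain rfl | ha := eq_or_ne a 0
        · simp
        · rw [if_neg ha]
          exact iha ha b.succ_ne_zero
      have leg : (if b = 0 then 0 else numLinearExtensions (· ⋖ ·) (nearHookCells (a + 1) b)) +
          (a + b + 3).choose (a + 2) = (a + b + 3) * (a + b + 1).choose (a + 1) := by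
        obtain rfl | hb := eq_or_ne b 0
        · simp
        · rw [if_neg hb, show a + b + 3 = a + 1 + b + 2 by ring,
            show a + b + 1 = a + 1 + b by ring]
          exact ihb hb
      rw [numLinearExtensions_nearHookCells_succ_succ,
        show a + 1 + (b + 1) = a + b + 1 + 1 by ring,
        Nat.choose_succ_succ' (a + b + 1) a,
        Nat.choose_succ_succ' (a + b + 1 + 1 + 1) (a + 1)]
      linear_combination arm + leg

lemma add_two_mul_add_one_mul_choose (a b : ℕ) :
    (a + b + 2) * ((a + b + 1) * (a + b).choose a) =
      (a + 1) * (b + 1) * (a + b + 2).choose (a + 1) := by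
  have hlower : (a + b).choose a * (a + b + 1) = (a + b + 1).choose a * (b + 1) := by
    rw [Nat.choose_mul_succ_eq, show a + b + 1 - a = b + 1 by omega]
  have hupper := Nat.add_one_mul_choose_eq (a + b + 1) a
  linear_combination (a + b + 2) * hlower + (b + 1) * hupper

theorem add_one_mul_numLinearExtensions_nearHookCells {a b : ℕ} (ha : a ≠ 0) (hb : b ≠ 0) :
    (a + b + 1) * numLinearExtensions (· ⋖ ·) (nearHookCells a b) =
      (a + b + 2).choose (a + 1) * (a * b) := by
  have hcount := numLinearExtensions_nearHookCells_add_choose ha hb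
  have hchoose := add_two_mul_add_one_mul_choose a b
  linear_combination (a + b + 1) * hcount + hchoose

lemma cellsOfRowLens_nearHook (a b : ℕ) :
    YoungDiagram.cellsOfRowLens ((a + 1) :: 2 :: List.replicate b 1) = nearHookCells a (b + 1) := by
  ext ⟨i, j⟩
  rw [← isCell_iff_mem_cellsOfRowLens, nearHookCells, mem_insert, mem_hookCells, IsCell]
  obtain _ | _ | i := i
  · simp
  · simp only [List.getD_cons_succ, List.getD_cons_zero, Prod.mk.injEq]
    grind
  · have hrow : (List.replicate b 1).getD i 0 = if i < b then 1 else 0 := by grind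
    simp only [List.getD_cons_succ, hrow, Prod.mk.injEq]
    grind

end NearHook

/-- For `n ≥ 5` and `1 ≤ d ≤ n - 3`, the number of standard Young tableaux of shape
`(d+1, 2, 1^(n-d-3))` equals `C(n, d+1) * d * (n-d-2) / (n-1)`. -/
theorem syt_betti_count (n d : ℕ) (hn : 5 ≤ n) (hd1 : 1 ≤ d) (hd2 : d ≤ n - 3) :
    (sytCount ((d + 1) :: 2 :: List.replicate (n - d - 3) 1) : ℚ) =
      (n.choose (d + 1) : ℚ) * ((d : ℚ) * ((n : ℚ) - d - 2)) / ((n : ℚ) - 1) := by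
  obtain ⟨b, rfl⟩ : ∃ b, n = d + b + 3 := ⟨n - d - 3, by omega⟩
  have hd : d ≠ 0 := by omega
  have hcount := add_one_mul_numLinearExtensions_nearHookCells hd b.succ_ne_zero
  rw [show d + b + 3 - d - 3 = b by omega, sytCount_eq_numLinearExtensions,
    cellsOfRowLens_nearHook]
  rw [show d + (b + 1) + 2 = d + b + 3 by ring] at hcount
  qify at hcount
  push_cast
  rw [eq_div_iff (by linarith)]
  linear_combination hcount
end

section
/- For n ≥ 5 and 1 ≤ d ≤ n-3, the total Betti number β_d of R/J_n, where J_n is the Stanley-Reisner ideal of the n-cycle over a field K, equals the number of standard Young tableaux of shape (d+1, 2, 1^(n-d-3)). -/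
/-- The Stanley–Reisner ideal `J n` of the `n`-cycle: the ideal of `K[x₀, …, x_{n-1}]`
generated by the monomials `xᵢxⱼ` over all diagonals `{i, j}` of the `n`-cycle. -/
noncomputable def cycleIdeal (n : ℕ) (K : Type) [Field K] :
    Ideal (MvPolynomial (Fin n) K) :=
  Ideal.span {m | ∃ i j : Fin n, i ≠ j ∧ ¬ cycAdj n i j ∧
    m = MvPolynomial.X i * MvPolynomial.X j}

/-- A minimal free resolution of the `MvPolynomial (Fin n) K`-module `M`:
free modules `Fᵈ = Rᵇ⁽ᵈ⁾` with differentials `φ d : F^{d+1} → F^d`, an augmentation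
`ε : F⁰ → M`, exactness, and minimality (all matrix entries of the differentials lie
in the maximal/irrelevant ideal, i.e. have zero constant coefficient). The rank `b d`
is then the `d`-th total Betti number `β_d(M)`. -/
structure MinimalFreeResolution (n : ℕ) (K : Type) [Field K]
    (M : Type) [AddCommGroup M] [Module (MvPolynomial (Fin n) K) M] where
  b : ℕ → ℕ
  φ : ∀ d : ℕ, (Fin (b (d + 1)) →₀ MvPolynomial (Fin n) K) →ₗ[MvPolynomial (Fin n) K]
        (Fin (b d) →₀ MvPolynomial (Fin n) K)
  ε : (Fin (b 0) →₀ MvPolynomial (Fin n) K) →ₗ[MvPolynomial (Fin n) K] M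
  surj : Function.Surjective ε
  exact_zero : LinearMap.ker ε = LinearMap.range (φ 0)
  exact_succ : ∀ d, LinearMap.ker (φ d) = LinearMap.range (φ (d + 1))
  minimal : ∀ d (i : Fin (b (d + 1))) (j : Fin (b d)),
    MvPolynomial.constantCoeff (φ d (Finsupp.single i 1) j) = 0

/-!
The total Betti numbers of `R/J` are the lengths of its Koszul homology modules with respect to the
variables. For the `n`-cycle there is an exact sequence
`0 → R/J → ∏ R/P_e → ∏ R/P_v → K → 0` over the edges `e` and the vertices `v`, where `P_A` is
generated by the variables outside `A`. The `d`-th Koszul homology of a quotient of `R` by `k`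
variables has length `k.choose d`. The second map is injective and the third surjective on Koszul
homology in the relevant degrees, so the long exact sequences break up and give
`β_d = n * (n-1).choose (d+1) - n * (n-2).choose (d+1) - n.choose (d+1)`, which equals
`n * (n-2).choose d - n.choose (d+1)`.

A standard tableau of shape `(d+1, 2, 1^(n-d-3))` is determined by its entry `x` at `(1, 1)` and the
set `A` of the other entries of its first row, apart from the corner. Here `x` and `A` are subject
only to `x` being neither the least element of `A ∪ {x}` nor the least element of `{2, …, n} \ A`,
and inclusion-exclusion yields the same number.
-/

/-! ### The Koszul complex -/

open CategoryTheory

universe u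

section KoszulChains

variable {R σ N N' : Type*} [CommRing R] [AddCommGroup N] [Module R N] [AddCommGroup N']
  [Module R N']

variable (R N) in
/-- The chains of homological degree `d`: those supported on the subsets with `d` elements. -/
def koszulDegree (σ : Type*) (d : ℕ) : Submodule R (Finset σ → N) where
  carrier := {f | ∀ S, S.card ≠ d → f S = 0}
  add_mem' hf hg S hS := by simp [hf S hS, hg S hS]
  zero_mem' _ _ := rfl
  smul_mem' r f hf S hS := by simp [hf S hS]

lemma comp_mem_koszulDegree (g : N →ₗ[R] N') {d : ℕ} {f : Finset σ → N}
    (hf : f ∈ koszulDegree R N σ d) : g ∘ f ∈ koszulDegree R N' σ d :=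
  fun S hS => by simp [hf S hS]

variable [LinearOrder σ]

/-- The sign `(-1)^#{j ∈ T | j < i}` of moving `eᵢ` into its place in `e_T`. -/
def koszulSign (R : Type*) [CommRing R] (i : σ) (T : Finset σ) : R :=
  (-1) ^ (T.filter (· < i)).card

lemma koszulSign_mul_self (i : σ) (T : Finset σ) :
    koszulSign R i T * koszulSign R i T = 1 := by
  rw [koszulSign, ← mul_pow, neg_one_mul, neg_neg, one_pow]

lemma koszulSign_insert {i j : σ} {T : Finset σ} (hj : j ∉ T) :
    koszulSign R i (insert j T) = (if j < i then -1 else 1) * koszulSign R i T := by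
  unfold koszulSign
  rw [Finset.filter_insert]
  split_ifs
  · rw [Finset.card_insert_of_notMem (by simp [hj]), pow_succ']
  · rw [one_mul]

lemma koszulSign_erase {i j : σ} {T : Finset σ} (hj : j ∈ T) :
    koszulSign R i (T.erase j) = (if j < i then -1 else 1) * koszulSign R i T := by
  conv_rhs => rw [← Finset.insert_erase hj, koszulSign_insert (Finset.notMem_erase j T)]
  split_ifs <;> simp

variable (R N) in
/-- Contraction with the dual basis vector `eᵢ*` on the exterior algebra with coefficients in `N`,
an element `∑ a_T e_T` of which is encoded as the function `T ↦ a_T`. -/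
def koszulContract (i : σ) : (Finset σ → N) →ₗ[R] (Finset σ → N) where
  toFun f T := if i ∈ T then 0 else koszulSign R i T • f (insert i T)
  map_add' f g := by ext T; by_cases h : i ∈ T <;> simp [h]
  map_smul' r f := by ext T; by_cases h : i ∈ T <;> simp [h, smul_comm r]

variable (R N) in
/-- Left exterior multiplication by the basis vector `eᵢ`. -/
def koszulWedge (i : σ) : (Finset σ → N) →ₗ[R] (Finset σ → N) where
  toFun f T := if i ∈ T then koszulSign R i T • f (T.erase i) else 0
  map_add' f g := by ext T; by_cases h : i ∈ T <;> simp [h]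
  map_smul' r f := by ext T; by_cases h : i ∈ T <;> simp [h, smul_comm r]

lemma koszulContract_apply (i : σ) (f : Finset σ → N) (T : Finset σ) :
    koszulContract R N i f T = if i ∈ T then 0 else koszulSign R i T • f (insert i T) := rfl

lemma koszulWedge_apply (i : σ) (f : Finset σ → N) (T : Finset σ) :
    koszulWedge R N i f T = if i ∈ T then koszulSign R i T • f (T.erase i) else 0 := rfl

lemma koszulContract_self (i : σ) (f : Finset σ → N) :
    koszulContract R N i (koszulContract R N i f) = 0 := by
  ext T
  simp [koszulContract_apply]

lemma koszulContract_swap {i j : σ} (hij : i ≠ j) (f : Finset σ → N) :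
    koszulContract R N i (koszulContract R N j f) =
      -koszulContract R N j (koszulContract R N i f) := by
  ext T
  by_cases hi : i ∈ T
  · simp [koszulContract_apply, hi]
  by_cases hj : j ∈ T
  · simp [koszulContract_apply, hj]
  simp only [koszulContract_apply, Pi.neg_apply, hi, hj, Finset.mem_insert, hij, hij.symm,
    or_false, if_false, koszulSign_insert hi, koszulSign_insert hj, Finset.insert_comm j i,
    smul_smul]
  rcases lt_or_gt_of_ne hij with h | h <;> simp [h, h.not_gt, mul_comm]

lemma koszulContract_wedge_self (i : σ) (f : Finset σ → N) :
    koszulContract R N i (koszulWedge R N i f) + koszulWedge R N i (koszulContract R N i f) =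
      f := by
  ext T
  by_cases hi : i ∈ T
  · simp [koszulContract_apply, koszulWedge_apply, hi, koszulSign_erase hi, smul_smul,
      koszulSign_mul_self]
  · simp [koszulContract_apply, koszulWedge_apply, hi, koszulSign_insert hi, smul_smul,
      koszulSign_mul_self]

lemma koszulContract_wedge_of_ne {i j : σ} (hij : i ≠ j) (f : Finset σ → N) :
    koszulContract R N i (koszulWedge R N j f) + koszulWedge R N j (koszulContract R N i f) =
      0 := by
  ext T
  by_cases hi : i ∈ T
  · simp [koszulContract_apply, koszulWedge_apply, hi, hij]
  by_cases hj : j ∈ T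
  · simp only [koszulContract_apply, koszulWedge_apply, Pi.add_apply, hi, hj, Finset.mem_insert,
      Finset.mem_erase, or_true, if_true, if_false, and_false, koszulSign_insert hi,
      koszulSign_erase hj, smul_smul, Finset.erase_insert_of_ne hij]
    rcases lt_or_gt_of_ne hij with h | h <;> simp [h, h.not_gt, mul_comm]
  · simp [koszulContract_apply, koszulWedge_apply, hj, hij.symm]

lemma koszulWedge_mem_koszulDegree {d : ℕ} {f : Finset σ → N} (hf : f ∈ koszulDegree R N σ d)
    (i : σ) : koszulWedge R N i f ∈ koszulDegree R N σ (d + 1) := by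
  intro S hS
  rw [koszulWedge_apply]
  split_ifs with hi
  · rw [hf _ (by have := Finset.card_erase_add_one hi; omega), smul_zero]
  · rfl

variable [Fintype σ]

variable (N) in
/-- The Koszul differential `∑ xᵢ eᵢ*` of the family `x` with coefficients in `N`. -/
def koszulD (x : σ → R) : (Finset σ → N) →ₗ[R] (Finset σ → N) :=
  ∑ i, x i • koszulContract R N i

lemma koszulD_eq_sum (x : σ → R) (f : Finset σ → N) :
    koszulD N x f = ∑ i, x i • koszulContract R N i f := by
  simp [koszulD]

lemma koszulD_apply (x : σ → R) (f : Finset σ → N) (T : Finset σ) :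
    koszulD N x f T = ∑ i, if i ∈ T then 0 else (x i * koszulSign R i T) • f (insert i T) := by
  rw [koszulD_eq_sum, Finset.sum_apply]
  refine Finset.sum_congr rfl fun i _ => ?_
  simp only [Pi.smul_apply, koszulContract_apply, smul_ite, smul_zero, mul_smul]

lemma koszulD_koszulD (x : σ → R) (f : Finset σ → N) : koszulD N x (koszulD N x f) = 0 := by
  simp only [koszulD_eq_sum, map_sum, map_smul, Finset.smul_sum]
  rw [← Finset.sum_product']
  have hself (i : σ) : x i • x i • koszulContract R N i (koszulContract R N i f) = 0 := by
    rw [koszulContract_self, smul_zero, smul_zero]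
  refine Finset.sum_involution (fun p _ => p.swap) ?_ ?_ (by simp) (by simp)
  · rintro ⟨i, j⟩ _
    rcases eq_or_ne i j with rfl | hij
    · simp [hself]
    · simp [koszulContract_swap hij, smul_comm (x i) (x j)]
  · rintro ⟨i, j⟩ _ hne heq
    obtain rfl : j = i := congrArg Prod.fst heq
    exact hne (hself j)

/-- Exterior multiplication by `eᵢ` is a homotopy from multiplication by `xᵢ` to zero. -/
lemma koszulD_wedge (x : σ → R) (i : σ) (f : Finset σ → N) :
    koszulD N x (koszulWedge R N i f) + koszulWedge R N i (koszulD N x f) = x i • f := by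
  simp only [koszulD_eq_sum, map_sum, map_smul]
  rw [← Finset.sum_add_distrib, Finset.sum_eq_single i]
  · rw [← smul_add, koszulContract_wedge_self]
  · intro j _ hj
    rw [← smul_add, koszulContract_wedge_of_ne hj, smul_zero]
  · simp

lemma koszulD_mem_koszulDegree (x : σ → R) {d : ℕ} {f : Finset σ → N}
    (hf : f ∈ koszulDegree R N σ (d + 1)) : koszulD N x f ∈ koszulDegree R N σ d := by
  intro S hS
  rw [koszulD_apply]
  refine Finset.sum_eq_zero fun i _ => ?_
  split_ifs with hi
  · rfl
  · rw [hf _ (by rw [Finset.card_insert_of_notMem hi]; omega), smul_zero]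

lemma koszulD_eq_zero_of_mem_koszulDegree_zero (x : σ → R) {f : Finset σ → N}
    (hf : f ∈ koszulDegree R N σ 0) : koszulD N x f = 0 := by
  ext S
  rw [koszulD_apply]
  refine Finset.sum_eq_zero fun i _ => ?_
  split_ifs with hi
  · rfl
  · rw [hf _ (by simp), smul_zero]

lemma koszulD_comp (x : σ → R) (g : N →ₗ[R] N') (f : Finset σ → N) :
    koszulD N' x (g ∘ f) = g ∘ koszulD N x f := by
  ext T
  simp only [koszulD_apply, Function.comp_apply, map_sum]
  refine Finset.sum_congr rfl fun i _ => ?_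
  split_ifs <;> simp

end KoszulChains

section ModuleCatHomology

variable {R : Type u} [Ring R] {ι : Type*} {c : ComplexShape ι}
  (K : HomologicalComplex (ModuleCat.{u} R) c)

lemma homologyπ_hom_surjective (i : ι) : Function.Surjective (K.homologyπ i).hom :=
  (ModuleCat.epi_iff_surjective _).1 inferInstance

lemma iCycles_hom_injective (i : ι) : Function.Injective (K.iCycles i).hom :=
  (ModuleCat.mono_iff_injective _).1 inferInstance

lemma homologyπ_hom_eq_zero_iff {i j : ι} (hij : c.prev j = i) (z : K.cycles j) :
    (K.homologyπ j).hom z = 0 ↔ ∃ y : K.X i, (K.d i j).hom y = (K.iCycles j).hom z := by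
  have hexact : (ShortComplex.mk _ _ (K.toCycles_comp_homologyπ i j)).Exact :=
    ShortComplex.exact_of_g_is_cokernel _ (K.homologyIsCokernel i j hij)
  rw [ShortComplex.ShortExact.moduleCat_exact_iff_function_exact] at hexact
  refine (hexact z).trans (exists_congr fun y => ?_)
  rw [← (iCycles_hom_injective K j).eq_iff, ← K.toCycles_i i j]
  rfl

end ModuleCatHomology

section KoszulDegree

variable {R N N' N'' : Type*} [CommRing R] [AddCommGroup N] [Module R N] [AddCommGroup N']
  [Module R N'] [AddCommGroup N''] [Module R N'']

/-- The map on chains of degree `d` induced by a linear map of coefficients. -/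
def koszulDegreeMap (σ : Type*) (d : ℕ) (g : N →ₗ[R] N') :
    koszulDegree R N σ d →ₗ[R] koszulDegree R N' σ d :=
  (g.compLeft (Finset σ)).restrict fun _ => comp_mem_koszulDegree g

lemma koszulDegreeMap_injective (σ : Type*) (d : ℕ) {g : N →ₗ[R] N'}
    (hg : Function.Injective g) : Function.Injective (koszulDegreeMap σ d g) :=
  fun _ _ h => Subtype.ext (hg.comp_left (congrArg Subtype.val h))

lemma koszulDegreeMap_surjective (σ : Type*) (d : ℕ) {g : N →ₗ[R] N'}
    (hg : Function.Surjective g) : Function.Surjective (koszulDegreeMap σ d g) := by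
  intro c
  choose b hb using hg
  refine ⟨⟨fun S => if S.card = d then b (c.1 S) else 0, fun S hS => if_neg hS⟩, ?_⟩
  refine Subtype.ext (funext fun S => ?_)
  change g (if S.card = d then b (c.1 S) else 0) = c.1 S
  split_ifs with hS
  · exact hb _
  · rw [map_zero, c.2 S hS]

lemma koszulDegreeMap_exact (σ : Type*) (d : ℕ) {f : N →ₗ[R] N'} {g : N' →ₗ[R] N''}
    (hfg : Function.Exact f g) :
    Function.Exact (koszulDegreeMap σ d f) (koszulDegreeMap σ d g) := by
  refine fun b => ⟨fun hb => ?_, ?_⟩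
  · choose a ha using fun S => (hfg (b.1 S)).1 (congrFun (congrArg Subtype.val hb) S)
    refine ⟨⟨fun S => if S.card = d then a S else 0, fun S hS => if_neg hS⟩, ?_⟩
    refine Subtype.ext (funext fun S => ?_)
    change f (if S.card = d then a S else 0) = b.1 S
    split_ifs with hS
    · exact ha S
    · rw [map_zero, b.2 S hS]
  · rintro ⟨a, rfl⟩
    exact Subtype.ext (funext fun S => hfg.apply_apply_eq_zero (a.1 S))

end KoszulDegree

section KoszulHomology

variable {R σ N N' : Type u} [CommRing R] [LinearOrder σ] [Fintype σ] [AddCommGroup N]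
  [Module R N] [AddCommGroup N'] [Module R N']

variable (N) in
/-- The Koszul differential from degree `d + 1` to degree `d`. -/
def koszulDifferential (x : σ → R) (d : ℕ) :
    koszulDegree R N σ (d + 1) →ₗ[R] koszulDegree R N σ d :=
  (koszulD N x).restrict fun _ => koszulD_mem_koszulDegree x

variable (N) in
/-- The Koszul complex of the family `x` with coefficients in `N`. -/
noncomputable abbrev koszulComplex (x : σ → R) : ChainComplex (ModuleCat.{u} R) ℕ :=
  ChainComplex.of (fun d => ModuleCat.of R (koszulDegree R N σ d))
    (fun d => ModuleCat.ofHom (koszulDifferential N x d))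
    (fun _ => ModuleCat.hom_ext <| LinearMap.ext fun f => Subtype.ext (koszulD_koszulD x f.1))

variable (N) in
lemma koszulComplex_d (x : σ → R) (d : ℕ) :
    (koszulComplex N x).d (d + 1) d = ModuleCat.ofHom (koszulDifferential N x d) :=
  ChainComplex.of_d (fun d => ModuleCat.of R (koszulDegree R N σ d))
    (fun d => ModuleCat.ofHom (koszulDifferential N x d)) d

/-- The chain map between Koszul complexes induced by a linear map of coefficients. -/
noncomputable abbrev koszulComplexMap (x : σ → R) (g : N →ₗ[R] N') :
    koszulComplex N x ⟶ koszulComplex N' x :=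
  ChainComplex.ofHom (fun d => ModuleCat.ofHom (koszulDegreeMap σ d g)) fun d => by
    rw [koszulComplex_d, koszulComplex_d]
    exact ModuleCat.hom_ext (LinearMap.ext fun f => Subtype.ext (koszulD_comp x g f.1))

variable (N) in
/-- The `d`-th homology module of the Koszul complex. -/
noncomputable abbrev KoszulHomology (x : σ → R) (d : ℕ) : ModuleCat.{u} R :=
  (koszulComplex N x).homology d

/-- The linear map on Koszul homology induced by a linear map of coefficients. -/
noncomputable def koszulHomologyMap (x : σ → R) (d : ℕ) (g : N →ₗ[R] N') :
    KoszulHomology N x d →ₗ[R] KoszulHomology N' x d :=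
  (HomologicalComplex.homologyMap (koszulComplexMap x g) d).hom

variable (N) in
/-- The cycles of degree `d`, as a submodule of all chains. -/
def koszulCycles (x : σ → R) (d : ℕ) : Submodule R (Finset σ → N) :=
  koszulDegree R N σ d ⊓ LinearMap.ker (koszulD N x)

variable (N) in
/-- The boundaries of degree `d`, as a submodule of all chains. -/
def koszulBoundaries (x : σ → R) (d : ℕ) : Submodule R (Finset σ → N) :=
  (koszulDegree R N σ (d + 1)).map (koszulD N x)

lemma comp_mem_koszulCycles {x : σ → R} {d : ℕ} {z : Finset σ → N} (hz : z ∈ koszulCycles N x d)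
    (g : N →ₗ[R] N') : g ∘ z ∈ koszulCycles N' x d := by
  refine ⟨comp_mem_koszulDegree g hz.1, ?_⟩
  refine (koszulD_comp x g z).trans ?_
  rw [LinearMap.mem_ker.1 hz.2]
  exact funext fun _ => map_zero g

/-- The map between modules of cycles induced by a linear map of coefficients. -/
def koszulCyclesMap (x : σ → R) (d : ℕ) (g : N →ₗ[R] N') :
    koszulCycles N x d →ₗ[R] koszulCycles N' x d :=
  (g.compLeft (Finset σ)).restrict fun _ hz => comp_mem_koszulCycles hz g

variable (N) in
lemma koszulCycles_inclusion_comp_d (x : σ → R) (d : ℕ) :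
    ModuleCat.ofHom (Submodule.inclusion (inf_le_left : koszulCycles N x d ≤ _)) ≫
      (koszulComplex N x).d d ((ComplexShape.down ℕ).next d) = 0 := by
  cases d with
  | zero =>
    rw [(koszulComplex N x).shape 0 _ (by simp)]
    exact Limits.comp_zero
  | succ d =>
    rw [ChainComplex.next_nat_succ, koszulComplex_d]
    exact ModuleCat.hom_ext (LinearMap.ext fun z => Subtype.ext z.2.2)

variable (N) in
/-- The cycles of degree `d` as elements of the categorical object of cycles. -/
noncomputable def koszulToCycles (x : σ → R) (d : ℕ) :
    ModuleCat.of R (koszulCycles N x d) ⟶ (koszulComplex N x).cycles d :=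
  (koszulComplex N x).liftCycles (ModuleCat.ofHom (Submodule.inclusion inf_le_left)) _ rfl
    (koszulCycles_inclusion_comp_d N x d)

lemma iCycles_koszulToCycles (x : σ → R) (d : ℕ) (z : koszulCycles N x d) :
    ((koszulComplex N x).iCycles d).hom ((koszulToCycles N x d).hom z) =
      Submodule.inclusion inf_le_left z :=
  LinearMap.congr_fun (congrArg ModuleCat.Hom.hom ((koszulComplex N x).liftCycles_i
    (ModuleCat.ofHom (Submodule.inclusion inf_le_left)) _ rfl
    (koszulCycles_inclusion_comp_d N x d))) z

lemma koszulToCycles_surjective (x : σ → R) (d : ℕ) :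
    Function.Surjective (koszulToCycles N x d).hom := by
  intro c
  obtain ⟨f, hf⟩ : ∃ f : koszulDegree R N σ d, ((koszulComplex N x).iCycles d).hom c = f := ⟨_, rfl⟩
  have hDf : koszulD N x f = 0 := by
    cases d with
    | zero => exact koszulD_eq_zero_of_mem_koszulDegree_zero x f.2
    | succ d =>
      have h := congrArg (fun φ => φ.hom c) ((koszulComplex N x).iCycles_d (d + 1) d)
      rw [koszulComplex_d, ModuleCat.hom_comp, LinearMap.comp_apply, hf] at h
      exact congrArg Subtype.val h
  refine ⟨⟨f, f.2, hDf⟩, iCycles_hom_injective _ d ?_⟩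
  rw [iCycles_koszulToCycles, hf]
  rfl

variable (N) in
/-- The homology class of a cycle. -/
noncomputable def koszulClass (x : σ → R) (d : ℕ) :
    koszulCycles N x d →ₗ[R] KoszulHomology N x d :=
  (koszulToCycles N x d ≫ (koszulComplex N x).homologyπ d).hom

lemma koszulClass_surjective (x : σ → R) (d : ℕ) : Function.Surjective (koszulClass N x d) :=
  (homologyπ_hom_surjective _ d).comp (koszulToCycles_surjective x d)

lemma koszulClass_eq_zero_iff {x : σ → R} {d : ℕ} {z : koszulCycles N x d} :
    koszulClass N x d z = 0 ↔ z.1 ∈ koszulBoundaries N x d := by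
  refine (homologyπ_hom_eq_zero_iff _ (ChainComplex.prev ℕ d)
    ((koszulToCycles N x d).hom z)).trans ?_
  rw [iCycles_koszulToCycles, koszulComplex_d]
  constructor
  · rintro ⟨y, hy⟩
    exact ⟨y.1, y.2, congrArg Subtype.val hy⟩
  · rintro ⟨y, hy, hyz⟩
    exact ⟨⟨y, hy⟩, Subtype.ext hyz⟩

lemma koszulHomologyMap_koszulClass (x : σ → R) (d : ℕ) (g : N →ₗ[R] N')
    (z : koszulCycles N x d) :
    koszulHomologyMap x d g (koszulClass N x d z) =
      koszulClass N' x d (koszulCyclesMap x d g z) := by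
  have h : koszulToCycles N x d ≫ HomologicalComplex.cyclesMap (koszulComplexMap x g) d =
      ModuleCat.ofHom (koszulCyclesMap x d g) ≫ koszulToCycles N' x d := by
    rw [← cancel_mono ((koszulComplex N' x).iCycles d), Category.assoc,
      HomologicalComplex.cyclesMap_i]
    refine ModuleCat.hom_ext (LinearMap.ext fun z => ?_)
    exact (congrArg (koszulDegreeMap σ d g) (iCycles_koszulToCycles x d z)).trans
      (iCycles_koszulToCycles x d (koszulCyclesMap x d g z)).symm
  have hπ := HomologicalComplex.homologyπ_naturality (koszulComplexMap x g) d
  exact (congrArg (fun φ => φ.hom ((koszulToCycles N x d).hom z)) hπ).trans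
    (congrArg (fun φ => ((koszulComplex N' x).homologyπ d).hom (φ.hom z)) h)

lemma koszulHomologyMap_injective_iff {x : σ → R} {d : ℕ} {g : N →ₗ[R] N'} :
    Function.Injective (koszulHomologyMap x d g) ↔
      ∀ z ∈ koszulCycles N x d, g ∘ z ∈ koszulBoundaries N' x d → z ∈ koszulBoundaries N x d := by
  rw [injective_iff_map_eq_zero, (koszulClass_surjective x d).forall, Subtype.forall]
  simp only [koszulHomologyMap_koszulClass, koszulClass_eq_zero_iff]
  rfl

lemma koszulHomologyMap_comp {N'' : Type u} [AddCommGroup N''] [Module R N''] (x : σ → R) (d : ℕ)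
    (h : N' →ₗ[R] N'') (g : N →ₗ[R] N') :
    koszulHomologyMap x d (h ∘ₗ g) = koszulHomologyMap x d h ∘ₗ koszulHomologyMap x d g := by
  ext a
  obtain ⟨z, rfl⟩ := koszulClass_surjective x d a
  simp only [LinearMap.comp_apply, koszulHomologyMap_koszulClass]
  rfl

lemma koszulHomologyMap_id (x : σ → R) (d : ℕ) :
    koszulHomologyMap x d (LinearMap.id : N →ₗ[R] N) = LinearMap.id := by
  ext a
  obtain ⟨z, rfl⟩ := koszulClass_surjective x d a
  exact koszulHomologyMap_koszulClass x d _ z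

lemma koszulHomologyMap_lsmul (x : σ → R) (d : ℕ) (i : σ) :
    koszulHomologyMap x d (LinearMap.lsmul R N (x i)) = 0 := by
  ext a
  obtain ⟨z, rfl⟩ := koszulClass_surjective x d a
  rw [koszulHomologyMap_koszulClass, LinearMap.zero_apply, koszulClass_eq_zero_iff]
  refine ⟨koszulWedge R N i z, koszulWedge_mem_koszulDegree z.2.1 i, ?_⟩
  have h := koszulD_wedge x i z.1
  rwa [LinearMap.mem_ker.1 z.2.2, map_zero, add_zero] at h

lemma koszulHomologyMap_zero_surjective (x : σ → R) {g : N →ₗ[R] N'}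
    (hg : Function.Surjective g) : Function.Surjective (koszulHomologyMap x 0 g) := by
  intro a
  obtain ⟨z, rfl⟩ := koszulClass_surjective x 0 a
  obtain ⟨y, hy⟩ := koszulDegreeMap_surjective σ 0 hg ⟨z, z.2.1⟩
  refine ⟨koszulClass N x 0 ⟨y, y.2, koszulD_eq_zero_of_mem_koszulDegree_zero x y.2⟩, ?_⟩
  rw [koszulHomologyMap_koszulClass]
  exact congrArg (koszulClass N' x 0) (Subtype.ext (congrArg (·.1) hy))

/-- A linear equivalence of coefficients induces an isomorphism on Koszul homology. -/
noncomputable def koszulHomologyCongr (x : σ → R) (d : ℕ) (e : N ≃ₗ[R] N') :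
    KoszulHomology N x d ≃ₗ[R] KoszulHomology N' x d :=
  LinearEquiv.ofLinearMap (koszulHomologyMap x d e) (koszulHomologyMap x d e.symm)
    (by rw [← koszulHomologyMap_comp, LinearEquiv.comp_coe, LinearEquiv.symm_trans_self]
        exact koszulHomologyMap_id x d)
    (by rw [← koszulHomologyMap_comp, LinearEquiv.comp_coe, LinearEquiv.self_trans_symm]
        exact koszulHomologyMap_id x d)

end KoszulHomology

section LongExactSequence

variable {R σ A B C : Type u} [CommRing R] [LinearOrder σ] [Fintype σ] [AddCommGroup A]
  [Module R A] [AddCommGroup B] [Module R B] [AddCommGroup C] [Module R C] {f : A →ₗ[R] B}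
  {g : B →ₗ[R] C}

lemma koszulComplexMap_comp_eq_zero (x : σ → R) (hfg : Function.Exact f g) :
    koszulComplexMap x f ≫ koszulComplexMap x g = 0 :=
  HomologicalComplex.hom_ext _ _ fun _ => ModuleCat.hom_ext <| LinearMap.ext fun z =>
    Subtype.ext <| funext fun S => hfg.apply_apply_eq_zero (z.1 S)

lemma koszulComplex_shortExact (x : σ → R) (hf : Function.Injective f)
    (hg : Function.Surjective g) (hfg : Function.Exact f g) :
    (ShortComplex.mk _ _ (koszulComplexMap_comp_eq_zero x hfg)).ShortExact :=
  HomologicalComplex.shortExact_of_degreewise_shortExact _ fun d =>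
    ModuleCat.shortComplex_shortExact _ (koszulDegreeMap_exact σ d hfg)
      (koszulDegreeMap_injective σ d hf) (koszulDegreeMap_surjective σ d hg)

lemma koszulHomologyMap_exact (x : σ → R) (d : ℕ) (hf : Function.Injective f)
    (hg : Function.Surjective g) (hfg : Function.Exact f g) :
    Function.Exact (koszulHomologyMap x d f) (koszulHomologyMap x d g) :=
  (ShortComplex.ShortExact.moduleCat_exact_iff_function_exact _).1
    ((koszulComplex_shortExact x hf hg hfg).homology_exact₂ d)

lemma exists_koszulHomology_connecting (x : σ → R) (d : ℕ) (hf : Function.Injective f)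
    (hg : Function.Surjective g) (hfg : Function.Exact f g) :
    ∃ δ : KoszulHomology C x (d + 1) →ₗ[R] KoszulHomology A x d,
      Function.Exact (koszulHomologyMap x (d + 1) g) δ ∧
        Function.Exact δ (koszulHomologyMap x d f) := by
  have hS := koszulComplex_shortExact x hf hg hfg
  refine ⟨(hS.δ (d + 1) d rfl).hom, ?_, ?_⟩
  · exact (ShortComplex.ShortExact.moduleCat_exact_iff_function_exact _).1
      (hS.homology_exact₃ (d + 1) d rfl)
  · exact (ShortComplex.ShortExact.moduleCat_exact_iff_function_exact _).1
      (hS.homology_exact₁ (d + 1) d rfl)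

/-- The long exact sequence splits off `0 → H_{d+1}(B) → H_{d+1}(C) → H_d(A) → 0`. -/
theorem length_koszulHomology_succ_of_injective (x : σ → R) (d : ℕ) (hf : Function.Injective f)
    (hg : Function.Surjective g) (hfg : Function.Exact f g)
    (hinj : Function.Injective (koszulHomologyMap x d g))
    (hinj' : Function.Injective (koszulHomologyMap x (d + 1) g)) :
    Module.length R (KoszulHomology C x (d + 1)) =
      Module.length R (KoszulHomology B x (d + 1)) + Module.length R (KoszulHomology A x d) := by
  obtain ⟨δ, hgδ, hδf⟩ := exists_koszulHomology_connecting x d hf hg hfg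
  refine Module.length_eq_add_of_exact _ δ hinj' (fun a => (hδf a).1 (hinj ?_)) hgδ
  rw [(koszulHomologyMap_exact x d hf hg hfg).apply_apply_eq_zero, map_zero]

/-- The long exact sequence splits off `0 → H_d(A) → H_d(B) → H_d(C) → 0`. -/
theorem length_koszulHomology_of_surjective (x : σ → R) (d : ℕ) (hf : Function.Injective f)
    (hg : Function.Surjective g) (hfg : Function.Exact f g)
    (hsurj : Function.Surjective (koszulHomologyMap x d g))
    (hsurj' : Function.Surjective (koszulHomologyMap x (d + 1) g)) :
    Module.length R (KoszulHomology B x d) =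
      Module.length R (KoszulHomology A x d) + Module.length R (KoszulHomology C x d) := by
  obtain ⟨δ, hgδ, hδf⟩ := exists_koszulHomology_connecting x d hf hg hfg
  refine Module.length_eq_add_of_exact _ _ ?_ hsurj (koszulHomologyMap_exact x d hf hg hfg)
  rw [injective_iff_map_eq_zero]
  intro a ha
  obtain ⟨c, rfl⟩ := (hδf a).1 ha
  obtain ⟨b, rfl⟩ := hsurj' c
  exact hgδ.apply_apply_eq_zero b

end LongExactSequence

section KoszulPi

variable {R σ N N' ι : Type u} [CommRing R] [LinearOrder σ] [Fintype σ] [AddCommGroup N]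
  [Module R N] [AddCommGroup N'] [Module R N'] {M : ι → Type u} [∀ i, AddCommGroup (M i)]
  [∀ i, Module R (M i)]

lemma comp_mem_koszulBoundaries {x : σ → R} {d : ℕ} {z : Finset σ → N}
    (hz : z ∈ koszulBoundaries N x d) (g : N →ₗ[R] N') : g ∘ z ∈ koszulBoundaries N' x d := by
  obtain ⟨y, hy, rfl⟩ := hz
  exact ⟨g ∘ y, comp_mem_koszulDegree g hy, koszulD_comp x g y⟩

lemma mem_koszulBoundaries_pi_iff {x : σ → R} {d : ℕ} {z : Finset σ → ∀ i, M i} :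
    z ∈ koszulBoundaries (∀ i, M i) x d ↔
      ∀ i, (fun S => z S i) ∈ koszulBoundaries (M i) x d := by
  refine ⟨fun hz i => comp_mem_koszulBoundaries hz (LinearMap.proj i), fun h => ?_⟩
  choose y hy hyz using h
  refine ⟨fun S i => y i S, fun S hS => funext fun i => hy i S hS, ?_⟩
  ext S i
  rw [← congrFun (hyz i) S]
  exact congrFun (koszulD_comp x (LinearMap.proj i : (∀ i, M i) →ₗ[R] M i)
    fun S i => y i S).symm S

end KoszulPi

/-! ### Koszul homology of quotients by variables -/

section VarIdeal

open MvPolynomial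

variable {σ K : Type*} [CommRing K]

variable (K) in
/-- The ideal generated by the variables indexed by `A`. -/
noncomputable def varIdeal (A : Finset σ) : Ideal (MvPolynomial σ K) :=
  Ideal.span (X '' (A : Set σ))

lemma mem_varIdeal {A : Finset σ} {p : MvPolynomial σ K} :
    p ∈ varIdeal K A ↔ ∀ m : σ →₀ ℕ, (∀ i ∈ A, m i = 0) → coeff m p = 0 := by
  rw [varIdeal, mem_ideal_span_X_image]
  refine forall_congr' fun m => ?_
  rw [mem_support_iff, ← not_imp_not, not_not]
  simp only [Finset.mem_coe, not_exists, not_and, not_not]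

lemma mem_varIdeal_univ [Fintype σ] {p : MvPolynomial σ K} :
    p ∈ varIdeal K Finset.univ ↔ constantCoeff p = 0 := by
  rw [mem_varIdeal, constantCoeff_eq]
  refine ⟨fun h => h 0 fun _ _ => rfl, fun h m hm => ?_⟩
  rwa [show m = 0 from Finsupp.ext fun i => hm i (Finset.mem_univ i)]

lemma mem_varIdeal_compl [Fintype σ] [DecidableEq σ] {A : Finset σ} {p : MvPolynomial σ K} :
    p ∈ varIdeal K Aᶜ ↔ ∀ m : σ →₀ ℕ, m.support ⊆ A → coeff m p = 0 := by
  rw [mem_varIdeal]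
  refine forall_congr' fun m => imp_congr_left (forall_congr' fun i => ?_)
  rw [Finset.mem_compl, Finsupp.mem_support_iff, ← not_imp_not, not_not]

lemma exists_coeff_eq {ι : Type*} [Finite ι] (p : ι → MvPolynomial σ K) (ε : (σ →₀ ℕ) → ι) :
    ∃ q : MvPolynomial σ K, ∀ m, coeff m q = coeff m (p (ε m)) := by
  classical
  have := Fintype.ofFinite ι
  refine ⟨∑ m ∈ Finset.univ.biUnion fun i => (p i).support, monomial m (coeff m (p (ε m))),
    fun m => ?_⟩
  rw [coeff_sum]
  simp only [coeff_monomial]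
  rw [Finset.sum_ite_eq']
  refine ite_eq_left_iff.2 fun hm => ?_
  contrapose! hm
  exact Finset.mem_biUnion.2 ⟨ε m, Finset.mem_univ _, mem_support_iff.2 hm.symm⟩

lemma varIdeal_mono {A B : Finset σ} (h : A ⊆ B) : varIdeal K A ≤ varIdeal K B :=
  Ideal.span_mono (Set.image_mono (Finset.coe_subset.2 h))

lemma varIdeal_union [DecidableEq σ] (A B : Finset σ) :
    varIdeal K (A ∪ B) = varIdeal K A ⊔ varIdeal K B := by
  rw [varIdeal, Finset.coe_union, Set.image_union, Ideal.span_union, varIdeal, varIdeal]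

lemma X_mem_varIdeal {A : Finset σ} {i : σ} (h : i ∈ A) : X i ∈ varIdeal K A :=
  Ideal.subset_span ⟨i, h, rfl⟩

variable (K) in
/-- The polynomial ring modulo the variables indexed by `A`, as a module. -/
abbrev VarQuotient (A : Finset σ) : Type _ := MvPolynomial σ K ⧸ varIdeal K A

variable (K) in
/-- The further reduction modulo the variables indexed by a larger set. -/
noncomputable def varFactor {A B : Finset σ} (h : A ⊆ B) :
    VarQuotient K A →ₗ[MvPolynomial σ K] VarQuotient K B :=
  Submodule.factor (varIdeal_mono h)

lemma varFactor_mk {A B : Finset σ} (h : A ⊆ B) (p : MvPolynomial σ K) :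
    varFactor K h (Submodule.Quotient.mk p) = Submodule.Quotient.mk p := rfl

lemma varFactor_self (A : Finset σ) : varFactor K (Finset.Subset.refl A) = LinearMap.id :=
  LinearMap.ext fun a => Submodule.Quotient.induction_on _ a fun _ => rfl

lemma varFactor_comp {A B C : Finset σ} (hAB : A ⊆ B) (hBC : B ⊆ C) :
    varFactor K hBC ∘ₗ varFactor K hAB = varFactor K (hAB.trans hBC) :=
  Submodule.factor_comp (varIdeal_mono hAB) (varIdeal_mono hBC)

lemma varFactor_surjective {A B : Finset σ} (h : A ⊆ B) : Function.Surjective (varFactor K h) :=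
  Submodule.factor_surjective (varIdeal_mono h)

lemma X_smul_eq_zero {A : Finset σ} {i : σ} (hi : i ∈ A) (a : VarQuotient K A) :
    (X i : MvPolynomial σ K) • a = 0 := by
  obtain ⟨p, rfl⟩ := Submodule.Quotient.mk_surjective _ a
  rw [← Submodule.Quotient.mk_smul, Submodule.Quotient.mk_eq_zero]
  exact Ideal.mul_mem_right p _ (X_mem_varIdeal hi)

lemma lsmul_X_injective {A : Finset σ} {i : σ} (hi : i ∉ A) :
    Function.Injective (LinearMap.lsmul (MvPolynomial σ K) (VarQuotient K A) (X i)) := by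
  classical
  refine (injective_iff_map_eq_zero _).2 fun a ha => ?_
  obtain ⟨p, rfl⟩ := Submodule.Quotient.mk_surjective _ a
  rw [LinearMap.lsmul_apply, ← Submodule.Quotient.mk_smul, Submodule.Quotient.mk_eq_zero,
    mem_varIdeal] at ha
  refine (Submodule.Quotient.mk_eq_zero _).2 (mem_varIdeal.2 fun m hm => ?_)
  rw [← coeff_X_mul m i p]
  refine ha _ fun j hj => ?_
  rw [Finsupp.add_apply, hm j hj, Finsupp.single_eq_of_ne (ne_of_mem_of_not_mem hj hi)]

lemma lsmul_X_varFactor_exact [DecidableEq σ] (A : Finset σ) (i : σ) :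
    Function.Exact (LinearMap.lsmul (MvPolynomial σ K) (VarQuotient K A) (X i))
      (varFactor K (Finset.subset_insert i A)) := by
  intro a
  constructor
  · obtain ⟨p, rfl⟩ := Submodule.Quotient.mk_surjective _ a
    rw [varFactor_mk, Submodule.Quotient.mk_eq_zero, varIdeal, Finset.coe_insert,
      Set.image_insert_eq, Ideal.mem_span_insert']
    rintro ⟨c, hc⟩
    refine ⟨Submodule.Quotient.mk (-c), ?_⟩
    rw [LinearMap.lsmul_apply, ← Submodule.Quotient.mk_smul, eq_comm, Submodule.Quotient.eq,
      smul_eq_mul, mul_neg, sub_neg_eq_add, mul_comm]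
    exact hc
  · rintro ⟨b, rfl⟩
    rw [LinearMap.lsmul_apply, map_smul, X_smul_eq_zero (Finset.mem_insert_self i A)]

lemma length_varQuotient_univ (σ K : Type*) [Fintype σ] [Field K] :
    Module.length (MvPolynomial σ K) (VarQuotient K (Finset.univ : Finset σ)) = 1 := by
  have hker : varIdeal K (Finset.univ : Finset σ) = RingHom.ker (constantCoeff (R := K)) :=
    Ideal.ext fun p => mem_varIdeal_univ.trans (RingHom.mem_ker).symm
  have hmax : (varIdeal K (Finset.univ : Finset σ)).IsMaximal :=
    hker ▸ RingHom.ker_isMaximal_of_surjective _ fun a => ⟨C a, constantCoeff_C σ a⟩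
  exact Module.length_eq_one_iff.2 (isSimpleModule_iff_isCoatom.2 hmax.out)

end VarIdeal

section VarQuotientHomology

/-- The family of all variables of a polynomial ring. -/
noncomputable abbrev indets (σ K : Type*) [CommSemiring K] : σ → MvPolynomial σ K := MvPolynomial.X

variable {σ K : Type u} [LinearOrder σ] [Fintype σ] [CommRing K]

lemma koszulHomologyMap_varFactor_insert_injective {A : Finset σ} {i : σ} (hi : i ∉ A) (d : ℕ) :
    Function.Injective
      (koszulHomologyMap (indets σ K) d (varFactor K (Finset.subset_insert i A))) := by
  rw [injective_iff_map_eq_zero]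
  intro a ha
  obtain ⟨b, rfl⟩ := (koszulHomologyMap_exact _ d (lsmul_X_injective hi)
    (varFactor_surjective _) (lsmul_X_varFactor_exact A i) a).1 ha
  rw [koszulHomologyMap_lsmul, LinearMap.zero_apply]

lemma koszulHomologyMap_varFactor_injective {A B : Finset σ} (h : A ⊆ B) (d : ℕ) :
    Function.Injective (koszulHomologyMap (indets σ K) d (varFactor K h)) := by
  induction hk : (B \ A).card generalizing A with
  | zero =>
    obtain rfl : A = B := h.antisymm (Finset.sdiff_eq_empty_iff_subset.1 (Finset.card_eq_zero.1 hk))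
    rw [varFactor_self, koszulHomologyMap_id]
    exact Function.injective_id
  | succ k ih =>
    obtain ⟨i, hi⟩ := Finset.card_pos.1 (k.succ_pos.trans_eq hk.symm)
    obtain ⟨hiB, hiA⟩ := Finset.mem_sdiff.1 hi
    rw [← varFactor_comp (Finset.subset_insert i A) (Finset.insert_subset hiB h),
      koszulHomologyMap_comp]
    refine (ih (Finset.insert_subset hiB h) ?_).comp
      (koszulHomologyMap_varFactor_insert_injective hiA d)
    rw [Finset.sdiff_insert, Finset.card_erase_of_mem hi, hk, Nat.add_sub_cancel]

variable (K) in
/-- Reduction of the polynomial ring modulo some of the variables to the residue field at the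
origin. -/
noncomputable abbrev residue (A : Finset σ) :
    VarQuotient K A →ₗ[MvPolynomial σ K] VarQuotient K (Finset.univ : Finset σ) :=
  varFactor K (Finset.subset_univ A)

lemma koszulBoundaries_varQuotient_univ (d : ℕ) :
    koszulBoundaries (VarQuotient K (Finset.univ : Finset σ)) (indets σ K) d = ⊥ := by
  rw [eq_bot_iff]
  rintro _ ⟨y, -, rfl⟩
  ext T
  rw [koszulD_apply]
  refine Finset.sum_eq_zero fun i _ => ?_
  rw [mul_comm, mul_smul, X_smul_eq_zero (Finset.mem_univ i), smul_zero, ite_self]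

lemma mem_koszulBoundaries_varQuotient_iff {A : Finset σ} {d : ℕ}
    {z : Finset σ → VarQuotient K A} (hz : z ∈ koszulCycles (VarQuotient K A) (indets σ K) d) :
    z ∈ koszulBoundaries (VarQuotient K A) (indets σ K) d ↔ ∀ S, residue K A (z S) = 0 := by
  have hres : residue K A ∘ z ∈ koszulBoundaries (VarQuotient K Finset.univ) (indets σ K) d ↔
      ∀ S, residue K A (z S) = 0 := by
    rw [koszulBoundaries_varQuotient_univ, Submodule.mem_bot, funext_iff]
    rfl
  rw [← hres]
  exact ⟨fun h => comp_mem_koszulBoundaries h _,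
    koszulHomologyMap_injective_iff.1 (koszulHomologyMap_varFactor_injective _ d) z hz⟩

/-- If `xᵢ` is the only variable acting nontrivially on the coefficients, then the component of
`D z` at `S \ {i}` is `± xᵢ z_S`. -/
lemma residue_eq_zero_of_koszulD_eq_zero {A : Finset σ} {i : σ} (hi : i ∉ A)
    {z : Finset σ → VarQuotient K A} (hz : koszulD (VarQuotient K A) (indets σ K) z = 0)
    {S : Finset σ} (hS : i ∈ S) : residue K A (z S) = 0 := by
  have hA : A ⊆ Finset.univ.erase i := Finset.subset_erase.2 ⟨Finset.subset_univ A, hi⟩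
  have hw :
      koszulD (VarQuotient K (Finset.univ.erase i)) (indets σ K) (varFactor K hA ∘ z) = 0 := by
    rw [koszulD_comp, hz]
    exact funext fun _ => map_zero _
  have hX : indets σ K i •
      (koszulSign (MvPolynomial σ K) i (S.erase i) • varFactor K hA (z S)) = 0 := by
    have h := congrFun hw (S.erase i)
    rw [koszulD_apply, Finset.sum_eq_single_of_mem i (Finset.mem_univ i),
      if_neg (Finset.notMem_erase i S), Finset.insert_erase hS, mul_smul] at h
    · exact h
    · intro j _ hj
      rw [mul_comm, mul_smul, X_smul_eq_zero (Finset.mem_erase.2 ⟨hj, Finset.mem_univ j⟩),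
        smul_zero, ite_self]
  have hzS : varFactor K hA (z S) = 0 := by
    have h := lsmul_X_injective (Finset.notMem_erase i _) (hX.trans (smul_zero (indets σ K i)).symm)
    rw [← one_smul (MvPolynomial σ K) (varFactor K hA (z S)), ← koszulSign_mul_self i (S.erase i),
      mul_smul, h, smul_zero]
  rw [residue, ← varFactor_comp hA (Finset.subset_univ _), LinearMap.comp_apply, hzS, map_zero]

end VarQuotientHomology

section VarProduct

variable {σ K ι : Type u} [LinearOrder σ] [Fintype σ] [CommRing K] {A : ι → Finset σ}

lemma mem_koszulBoundaries_varProduct_iff {d : ℕ} {z : Finset σ → ∀ i, VarQuotient K (A i)}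
    (hz : z ∈ koszulCycles (∀ i, VarQuotient K (A i)) (indets σ K) d) :
    z ∈ koszulBoundaries (∀ i, VarQuotient K (A i)) (indets σ K) d ↔
      ∀ i, ∀ S ∈ (A i).powersetCard d, residue K (A i) (z S i) = 0 := by
  have hzi (i : ι) : (fun S => z S i) ∈ koszulCycles (VarQuotient K (A i)) (indets σ K) d :=
    comp_mem_koszulCycles hz (LinearMap.proj i)
  rw [mem_koszulBoundaries_pi_iff]
  refine forall_congr' fun i => (mem_koszulBoundaries_varQuotient_iff (hzi i)).trans
    ⟨fun h S _ => h S, fun h S => ?_⟩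
  by_cases hS : S ∈ (A i).powersetCard d
  · exact h S hS
  by_cases hSd : S.card = d
  · obtain ⟨j, hjS, hjA⟩ := Finset.not_subset.1
      fun hSA => hS (Finset.mem_powersetCard.2 ⟨hSA, hSd⟩)
    exact residue_eq_zero_of_koszulD_eq_zero hjA (hzi i).2 hjS
  · rw [hz.1 S hSd, Pi.zero_apply, map_zero]

lemma mem_koszulCycles_varProduct {d : ℕ} {z : Finset σ → ∀ i, VarQuotient K (A i)}
    (hz : ∀ i, ∀ S ∉ (A i).powersetCard d, z S i = 0) :
    z ∈ koszulCycles (∀ i, VarQuotient K (A i)) (indets σ K) d := by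
  refine ⟨fun S hS => funext fun i => hz i S fun h => hS (Finset.mem_powersetCard.1 h).2, ?_⟩
  refine LinearMap.mem_ker.2 (funext fun T => funext fun i => ?_)
  rw [koszulD_apply, Finset.sum_apply]
  refine Finset.sum_eq_zero fun j _ => ?_
  split_ifs with hj
  · rfl
  rw [Pi.smul_apply, mul_comm, mul_smul]
  by_cases h : insert j T ∈ (A i).powersetCard d
  · rw [X_smul_eq_zero ((Finset.mem_powersetCard.1 h).1 (Finset.mem_insert_self j T)), smul_zero]
  · rw [hz i _ h, smul_zero, smul_zero]

variable (K A) in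
/-- The values at the origin of those components of a cycle which determine its homology class. -/
noncomputable def faceResidues (d : ℕ) :
    koszulCycles (∀ i, VarQuotient K (A i)) (indets σ K) d →ₗ[MvPolynomial σ K]
      ((p : (i : ι) × (A i).powersetCard d) → VarQuotient K (Finset.univ : Finset σ)) :=
  LinearMap.pi fun p => residue K (A p.1) ∘ₗ LinearMap.proj p.1 ∘ₗ LinearMap.proj p.2.1 ∘ₗ
    Submodule.subtype _

lemma faceResidues_surjective (d : ℕ) : Function.Surjective (faceResidues K A d) := by
  intro w
  choose c hc using fun p => varFactor_surjective (Finset.subset_univ (A p.1)) (w p)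
  refine ⟨⟨fun S i => if h : S ∈ (A i).powersetCard d then c ⟨i, S, h⟩ else 0,
    mem_koszulCycles_varProduct fun i S hS => dif_neg hS⟩, ?_⟩
  ext ⟨i, S, hS⟩
  rw [← hc]
  exact congrArg (residue K (A i)) (dif_pos hS)

lemma ker_faceResidues (d : ℕ) :
    LinearMap.ker (faceResidues K A d) = LinearMap.ker (koszulClass _ (indets σ K) d) := by
  ext z
  rw [LinearMap.mem_ker, LinearMap.mem_ker, koszulClass_eq_zero_iff,
    mem_koszulBoundaries_varProduct_iff z.2, funext_iff, Sigma.forall]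
  exact forall_congr' fun i => Subtype.forall

lemma koszulHomologyMap_eq_zero_of_residue {N : Type u} [AddCommGroup N]
    [Module (MvPolynomial σ K) N] {f : N →ₗ[MvPolynomial σ K] (∀ i, VarQuotient K (A i))}
    (hf : ∀ a i, residue K (A i) (f a i) = 0) (d : ℕ) : koszulHomologyMap (indets σ K) d f = 0 := by
  ext a
  obtain ⟨z, rfl⟩ := koszulClass_surjective _ d a
  rw [koszulHomologyMap_koszulClass, LinearMap.zero_apply, koszulClass_eq_zero_iff,
    mem_koszulBoundaries_varProduct_iff (koszulCyclesMap _ d f z).2]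
  exact fun i S _ => hf (z.1 S) i

end VarProduct

theorem length_koszulHomology_varProduct {σ K ι : Type u} [LinearOrder σ] [Fintype σ] [Field K]
    [Fintype ι] (A : ι → Finset σ) (d : ℕ) :
    Module.length (MvPolynomial σ K)
      (KoszulHomology (∀ i, VarQuotient K (A i)) (indets σ K) d) =
      ((∑ i, (A i).card.choose d : ℕ) : ℕ∞) := by
  have e := (LinearMap.quotKerEquivOfSurjective _ (koszulClass_surjective _ d)).symm ≪≫ₗ
    Submodule.quotEquivOfEq _ _ (ker_faceResidues (K := K) (A := A) d).symm ≪≫ₗ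
    LinearMap.quotKerEquivOfSurjective _ (faceResidues_surjective d)
  rw [e.length_eq, Module.length_pi_of_fintype]
  simp only [length_varQuotient_univ, Finset.sum_const, Finset.card_univ, Fintype.card_sigma,
    Fintype.card_coe, Finset.card_powersetCard, nsmul_eq_mul, mul_one]

theorem length_koszulHomology_varQuotient {σ : Type u} (K : Type u) [LinearOrder σ] [Fintype σ]
    [Field K] (A : Finset σ) (d : ℕ) :
    Module.length (MvPolynomial σ K) (KoszulHomology (VarQuotient K A) (indets σ K) d) =
      ((A.card.choose d : ℕ) : ℕ∞) := by
  have e := LinearEquiv.funUnique PUnit.{u + 1} (MvPolynomial σ K) (VarQuotient K A)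
  rw [← (koszulHomologyCongr (indets σ K) d e).length_eq,
    length_koszulHomology_varProduct fun _ => A, Fintype.sum_unique]

/-! ### Koszul homology and minimal free resolutions -/

section FreeModules

variable (σ K ι : Type*) [Finite ι] [CommRing K]

/-- A free module as a product of quotients by the empty set of variables. -/
noncomputable def freeEquiv :
    (ι →₀ MvPolynomial σ K) ≃ₗ[MvPolynomial σ K] (ι → VarQuotient K (∅ : Finset σ)) :=
  Finsupp.linearEquivFunOnFinite _ _ _ ≪≫ₗ LinearEquiv.piCongrRight fun _ =>
    (Submodule.quotEquivOfEqBot _ (by rw [varIdeal, Finset.coe_empty, Set.image_empty,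
      Ideal.span_empty])).symm

lemma freeEquiv_apply (f : ι →₀ MvPolynomial σ K) (i : ι) :
    freeEquiv σ K ι f i = Submodule.Quotient.mk (f i) := rfl

end FreeModules

section FreeCover

variable {σ K ι A C : Type u} [LinearOrder σ] [Fintype σ] [Finite ι] [AddCommGroup A]
  [AddCommGroup C]

section CommRing

variable [CommRing K] [Module (MvPolynomial σ K) A] [Module (MvPolynomial σ K) C]
  {f : A →ₗ[MvPolynomial σ K] (ι →₀ MvPolynomial σ K)}
  {g : (ι →₀ MvPolynomial σ K) →ₗ[MvPolynomial σ K] C}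

lemma koszulHomologyMap_eq_zero_of_minimal
    (hmin : ∀ a i, MvPolynomial.constantCoeff (f a i) = 0) (d : ℕ) :
    koszulHomologyMap (indets σ K) d f = 0 := by
  have h : koszulHomologyMap (indets σ K) d ((freeEquiv σ K ι).toLinearMap ∘ₗ f) = 0 :=
    koszulHomologyMap_eq_zero_of_residue (fun a i => by
      rw [LinearMap.comp_apply, LinearEquiv.coe_coe, freeEquiv_apply, varFactor_mk,
        Submodule.Quotient.mk_eq_zero, mem_varIdeal_univ, hmin]) d
  rw [koszulHomologyMap_comp] at h
  ext a
  exact (koszulHomologyCongr (indets σ K) d (freeEquiv σ K ι)).injective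
    ((LinearMap.congr_fun h a).trans (map_zero _).symm)

lemma koszulHomologyMap_injective_of_minimal (hf : Function.Injective f)
    (hg : Function.Surjective g) (hfg : Function.Exact f g)
    (hmin : ∀ a i, MvPolynomial.constantCoeff (f a i) = 0) (d : ℕ) :
    Function.Injective (koszulHomologyMap (indets σ K) d g) := by
  rw [injective_iff_map_eq_zero]
  intro b hb
  obtain ⟨a, rfl⟩ := (koszulHomologyMap_exact (indets σ K) d hf hg hfg b).1 hb
  rw [koszulHomologyMap_eq_zero_of_minimal hmin, LinearMap.zero_apply]

end CommRing

variable [Field K] [Module (MvPolynomial σ K) A] [Module (MvPolynomial σ K) C]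
  {f : A →ₗ[MvPolynomial σ K] (ι →₀ MvPolynomial σ K)}
  {g : (ι →₀ MvPolynomial σ K) →ₗ[MvPolynomial σ K] C}

variable (σ K ι) in
lemma length_koszulHomology_free (d : ℕ) :
    Module.length (MvPolynomial σ K) (KoszulHomology (ι →₀ MvPolynomial σ K) (indets σ K) d) =
      ((Nat.card ι * Nat.choose 0 d : ℕ) : ℕ∞) := by
  have := Fintype.ofFinite ι
  rw [(koszulHomologyCongr (indets σ K) d (freeEquiv σ K ι)).length_eq,
    length_koszulHomology_varProduct fun _ => ∅]
  simp

lemma length_koszulHomology_succ_of_minimal (hf : Function.Injective f)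
    (hg : Function.Surjective g) (hfg : Function.Exact f g)
    (hmin : ∀ a i, MvPolynomial.constantCoeff (f a i) = 0) (d : ℕ) :
    Module.length (MvPolynomial σ K) (KoszulHomology C (indets σ K) (d + 1)) =
      Module.length (MvPolynomial σ K) (KoszulHomology A (indets σ K) d) := by
  have hinj := koszulHomologyMap_injective_of_minimal hf hg hfg hmin
  rw [length_koszulHomology_succ_of_injective _ d hf hg hfg (hinj d) (hinj (d + 1)),
    length_koszulHomology_free, Nat.choose_zero_succ, mul_zero, Nat.cast_zero, zero_add]

lemma length_koszulHomology_zero_of_minimal (hf : Function.Injective f)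
    (hg : Function.Surjective g) (hfg : Function.Exact f g)
    (hmin : ∀ a i, MvPolynomial.constantCoeff (f a i) = 0) :
    Module.length (MvPolynomial σ K) (KoszulHomology C (indets σ K) 0) = Nat.card ι := by
  have e := LinearEquiv.ofBijective (koszulHomologyMap (indets σ K) 0 g)
    ⟨koszulHomologyMap_injective_of_minimal hf hg hfg hmin 0,
      koszulHomologyMap_zero_surjective _ hg⟩
  rw [← e.length_eq, length_koszulHomology_free, Nat.choose_zero_right, mul_one]

end FreeCover

namespace MinimalFreeResolution

variable {n : ℕ} {K M : Type} [Field K] [AddCommGroup M] [Module (MvPolynomial (Fin n) K) M]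
  (F : MinimalFreeResolution n K M)

lemma constantCoeff_φ (d : ℕ) (f : Fin (F.b (d + 1)) →₀ MvPolynomial (Fin n) K)
    (j : Fin (F.b d)) : MvPolynomial.constantCoeff (F.φ d f j) = 0 := by
  induction f using Finsupp.induction_linear with
  | zero => rw [map_zero, Finsupp.zero_apply, map_zero]
  | add f g hf hg => rw [map_add, Finsupp.add_apply, map_add, hf, hg, add_zero]
  | single i r =>
    rw [← mul_one r, ← smul_eq_mul, ← Finsupp.smul_single, map_smul, Finsupp.smul_apply,
      smul_eq_mul, map_mul, F.minimal, mul_zero]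

variable (k : ℕ)

lemma constantCoeff_subtype_range_φ (a : LinearMap.range (F.φ k)) (j : Fin (F.b k)) :
    MvPolynomial.constantCoeff ((LinearMap.range (F.φ k)).subtype a j) = 0 := by
  obtain ⟨_, f, rfl⟩ := a
  exact F.constantCoeff_φ k f j

lemma exact_subtype_range_succ :
    Function.Exact (LinearMap.range (F.φ (k + 1))).subtype (F.φ k).rangeRestrict := by
  rw [LinearMap.exact_iff, LinearMap.ker_rangeRestrict, F.exact_succ, Submodule.range_subtype]

lemma length_koszulHomology_range (d : ℕ) :
    Module.length (MvPolynomial (Fin n) K)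
      (KoszulHomology (LinearMap.range (F.φ k)) (indets (Fin n) K) d) = F.b (k + d + 1) := by
  induction d generalizing k with
  | zero =>
    rw [length_koszulHomology_zero_of_minimal (A := LinearMap.range (F.φ (k + 1)))
      (Submodule.injective_subtype _) (F.φ k).surjective_rangeRestrict
      (F.exact_subtype_range_succ k) (F.constantCoeff_subtype_range_φ (k + 1)), Nat.card_fin,
      add_zero]
  | succ d ih =>
    rw [length_koszulHomology_succ_of_minimal (A := LinearMap.range (F.φ (k + 1)))
      (Submodule.injective_subtype _) (F.φ k).surjective_rangeRestrict
      (F.exact_subtype_range_succ k) (F.constantCoeff_subtype_range_φ (k + 1)), ih, add_assoc k 1 d,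
      add_comm 1 d]

theorem length_koszulHomology (d : ℕ) :
    Module.length (MvPolynomial (Fin n) K) (KoszulHomology M (indets (Fin n) K) (d + 1)) =
      F.b (d + 1) := by
  have hexact : Function.Exact (LinearMap.range (F.φ 0)).subtype F.ε := by
    rw [LinearMap.exact_iff, F.exact_zero, Submodule.range_subtype]
  rw [length_koszulHomology_succ_of_minimal (A := LinearMap.range (F.φ 0))
    (Submodule.injective_subtype _) F.surj hexact (F.constantCoeff_subtype_range_φ 0),
    F.length_koszulHomology_range, zero_add]

end MinimalFreeResolution

/-! ### The cycle -/

section FinCycle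

variable {n : ℕ} [NeZero n]

lemma val_add_one_eq_ite (v : Fin n) :
    ((v + 1 : Fin n) : ℕ) = if (v : ℕ) + 1 = n then 0 else (v : ℕ) + 1 := by
  rw [Fin.val_add, Fin.val_one', Nat.add_mod_mod]
  split_ifs with h
  · rw [h, Nat.mod_self]
  · exact Nat.mod_eq_of_lt (by omega)

lemma add_one_ne (hn : 2 ≤ n) (v : Fin n) : v + 1 ≠ v := by
  rw [ne_eq, Fin.ext_iff, val_add_one_eq_ite]
  split_ifs <;> omega

lemma add_one_add_one_ne (hn : 3 ≤ n) (v : Fin n) : v + 1 + 1 ≠ v := by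
  rw [ne_eq, Fin.ext_iff, val_add_one_eq_ite, val_add_one_eq_ite]
  split_ifs <;> omega

lemma add_one_add_one_add_one_ne (hn : 4 ≤ n) (v : Fin n) : v + 1 + 1 + 1 ≠ v := by
  rw [ne_eq, Fin.ext_iff, val_add_one_eq_ite, val_add_one_eq_ite, val_add_one_eq_ite]
  split_ifs <;> omega

lemma cycAdj_iff {i j : Fin n} : cycAdj n i j ↔ i + 1 = j ∨ j + 1 = i := by
  simp only [cycAdj, Fin.ext_iff, Fin.val_add, Fin.val_one', Nat.add_mod_mod]

lemma subset_edge_of_pairwise_cycAdj {S : Finset (Fin n)} (hn : 4 ≤ n)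
    (hS : (S : Set (Fin n)).Pairwise (cycAdj n)) {a : Fin n} (ha : a ∈ S) (ha' : a + 1 ∈ S) :
    S ⊆ {a, a + 1} := by
  intro c hc
  rw [Finset.mem_insert, Finset.mem_singleton]
  by_contra! h
  rcases cycAdj_iff.1 (hS hc ha h.1) with hca | hca
  · rcases cycAdj_iff.1 (hS hc ha' h.2) with hcb | hcb
    · exact h.1 (add_right_cancel hcb)
    · subst hcb
      exact add_one_add_one_add_one_ne hn a hca
  · exact h.2 hca.symm

lemma exists_subset_edge_of_pairwise_cycAdj {S : Finset (Fin n)} (hn : 4 ≤ n)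
    (hS : (S : Set (Fin n)).Pairwise (cycAdj n)) : ∃ e : Fin n, S ⊆ {e, e + 1} := by
  rcases S.eq_empty_or_nonempty with rfl | ⟨a, ha⟩
  · exact ⟨0, Finset.empty_subset _⟩
  by_cases h : ∃ b ∈ S, a ≠ b
  · obtain ⟨b, hb, hab⟩ := h
    rcases cycAdj_iff.1 (hS ha hb hab) with rfl | rfl
    · exact ⟨a, subset_edge_of_pairwise_cycAdj hn hS ha hb⟩
    · exact ⟨b, subset_edge_of_pairwise_cycAdj hn hS hb ha⟩
  · push Not at h
    exact ⟨a, fun i hi => Finset.mem_insert.2 (Or.inl (h i hi).symm)⟩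

lemma eq_of_forall_eq_add_one {β : Sort*} {f : Fin n → β} (h : ∀ v, f v = f (v + 1))
    (i j : Fin n) : f i = f j := by
  have hzero (k : ℕ) (hk : k < n) : f ⟨k, hk⟩ = f 0 := by
    induction k with
    | zero => rfl
    | succ k ih =>
      rw [← ih (by omega), h ⟨k, by omega⟩]
      congr 1
      rw [Fin.ext_iff, val_add_one_eq_ite, if_neg (by dsimp only; omega)]
  exact (hzero i i.2).trans (hzero j j.2).symm

lemma eq_of_subset_edges {β : Sort*} {f : Fin n → β} {S : Finset (Fin n)} (hn : 3 ≤ n)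
    (hf : ∀ e, S ⊆ {e + 1} → f e = f (e + 1)) {e e' : Fin n} (he : S ⊆ {e, e + 1})
    (he' : S ⊆ {e', e' + 1}) : f e = f e' := by
  have hshift (a : Fin n) (ha : S ⊆ {a, a + 1}) (ha' : S ⊆ {a + 1, a + 1 + 1}) :
      f a = f (a + 1) := by
    refine hf a fun i hi => Finset.mem_singleton.2 ?_
    have hia := Finset.mem_insert.1 (ha hi)
    have hia' := Finset.mem_insert.1 (ha' hi)
    rw [Finset.mem_singleton] at hia hia'
    rcases hia with rfl | hia
    · exact hia'.resolve_right (add_one_add_one_ne hn i).symm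
    · exact hia
  rcases S.eq_empty_or_nonempty with rfl | ⟨a, ha⟩
  · exact eq_of_forall_eq_add_one (fun v => hf v (Finset.empty_subset _)) e e'
  have hae := Finset.mem_insert.1 (he ha)
  have hae' := Finset.mem_insert.1 (he' ha)
  rw [Finset.mem_singleton] at hae hae'
  rcases hae with rfl | rfl <;> rcases hae' with h | h
  · rw [h]
  · subst h
    exact (hshift e' he' he).symm
  · subst h
    exact hshift e he he'
  · rw [add_right_cancel h]

lemma exists_sub_add_one_eq {M : Type*} [AddCommGroup M] {a : Fin n → M} (ha : ∑ i, a i = 0) :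
    ∃ c : Fin n → M, ∀ v, c v - c (v + 1) = a v := by
  have hIci (v : Fin n) : ∑ i ∈ Finset.Ici (v + 1), a i = ∑ i ∈ Finset.Ioi v, a i := by
    by_cases h : (v : ℕ) + 1 = n
    · have h0 : v + 1 = 0 := Fin.ext (by rw [val_add_one_eq_ite, if_pos h, Fin.val_zero])
      have huniv : Finset.Ici (v + 1) = Finset.univ := by
        ext i
        simp only [h0, Finset.mem_Ici, Fin.zero_le, Finset.mem_univ]
      have hempty : Finset.Ioi v = ∅ := by
        ext i
        simp only [Finset.mem_Ioi, Fin.lt_def, Finset.notMem_empty, iff_false]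
        omega
      rw [huniv, ha, hempty, Finset.sum_empty]
    · congr 1
      ext i
      rw [Finset.mem_Ici, Finset.mem_Ioi, Fin.le_def, Fin.lt_def, val_add_one_eq_ite, if_neg h,
        Nat.succ_le_iff]
  refine ⟨fun v => ∑ i ∈ Finset.Ici v, a i, fun v => ?_⟩
  beta_reduce
  rw [hIci, ← Finset.Ioi_insert, Finset.sum_insert Finset.notMem_Ioi_self, add_sub_cancel_right]

end FinCycle

section CycleIdeal

open MvPolynomial

variable {n : ℕ} {K : Type} [Field K]

lemma monomial_mem_cycleIdeal {m : Fin n →₀ ℕ} (r : K)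
    (hm : ¬ (m.support : Set (Fin n)).Pairwise (cycAdj n)) :
    monomial m r ∈ cycleIdeal n K := by
  simp only [Set.Pairwise, not_forall] at hm
  obtain ⟨i, hi, j, hj, hij, hadj⟩ := hm
  have hle : Finsupp.single i 1 + Finsupp.single j 1 ≤ m := by
    intro k
    have hi := Nat.pos_of_ne_zero (Finsupp.mem_support_iff.1 hi)
    have hj := Nat.pos_of_ne_zero (Finsupp.mem_support_iff.1 hj)
    rw [Finsupp.add_apply, Finsupp.single_apply, Finsupp.single_apply]
    split_ifs with hik hjk hjk
    · exact absurd (hik.trans hjk.symm) hij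
    · exact hik ▸ hi
    · rwa [zero_add, ← hjk]
    · exact Nat.zero_le _
  have hmul : monomial m r =
      monomial (m - (Finsupp.single i 1 + Finsupp.single j 1)) r * (X i * X j) := by
    rw [X, X, monomial_mul, monomial_mul, one_mul, mul_one, tsub_add_cancel_of_le hle]
  rw [hmul]
  exact Ideal.mul_mem_left _ _ (Ideal.subset_span ⟨i, j, hij, hadj, rfl⟩)

variable [NeZero n]

lemma cycleIdeal_le_varIdeal_edge (e : Fin n) : cycleIdeal n K ≤ varIdeal K {e, e + 1}ᶜ := by
  refine Ideal.span_le.2 ?_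
  rintro _ ⟨i, j, hij, hadj, rfl⟩
  by_cases hi : i ∈ ({e, e + 1}ᶜ : Finset (Fin n))
  · exact Ideal.mul_mem_right _ _ (X_mem_varIdeal hi)
  by_cases hj : j ∈ ({e, e + 1}ᶜ : Finset (Fin n))
  · exact Ideal.mul_mem_left _ _ (X_mem_varIdeal hj)
  refine absurd (cycAdj_iff.2 ?_) hadj
  simp only [Finset.mem_compl, Finset.mem_insert, Finset.mem_singleton, not_not] at hi hj
  rcases hi with rfl | rfl <;> rcases hj with rfl | rfl <;> simp_all

lemma mem_cycleIdeal_iff (hn : 4 ≤ n) {p : MvPolynomial (Fin n) K} :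
    p ∈ cycleIdeal n K ↔ ∀ e : Fin n, p ∈ varIdeal K {e, e + 1}ᶜ := by
  refine ⟨fun hp e => cycleIdeal_le_varIdeal_edge e hp, fun h => ?_⟩
  rw [← support_sum_monomial_coeff p]
  refine Ideal.sum_mem _ fun m hm => monomial_mem_cycleIdeal _ fun hadj => ?_
  obtain ⟨e, he⟩ := exists_subset_edge_of_pairwise_cycAdj hn hadj
  exact mem_support_iff.1 hm (mem_varIdeal_compl.1 (h e) m he)

end CycleIdeal

section CycleResolution

open MvPolynomial

variable (n : ℕ) [NeZero n] (K : Type)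

section CommRing

variable [CommRing K]

/-- The product of the coordinate rings of the edges of the cycle. -/
abbrev EdgeModule : Type := ∀ e : Fin n, VarQuotient K ({e, e + 1}ᶜ : Finset (Fin n))

/-- The product of the coordinate rings of the vertices of the cycle. It is indexed by edges: the
index `e` stands for the vertex `e + 1` shared by the edges `e` and `e + 1`. -/
abbrev VertexModule : Type := ∀ e : Fin n, VarQuotient K ({e + 1}ᶜ : Finset (Fin n))

lemma compl_edge_subset_left (e : Fin n) : ({e, e + 1}ᶜ : Finset (Fin n)) ⊆ {e + 1}ᶜ :=
  Finset.compl_subset_compl.2 (Finset.subset_insert _ _)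

lemma compl_edge_subset_right (e : Fin n) : ({e + 1, e + 1 + 1}ᶜ : Finset (Fin n)) ⊆ {e + 1}ᶜ :=
  Finset.compl_subset_compl.2 (Finset.singleton_subset_iff.2 (Finset.mem_insert_self _ _))

/-- The differences at the vertices of the two functions on the adjacent edges. -/
noncomputable def edgesToVertices : EdgeModule n K →ₗ[MvPolynomial (Fin n) K] VertexModule n K :=
  LinearMap.pi fun e => varFactor K (compl_edge_subset_left n e) ∘ₗ LinearMap.proj e -
    varFactor K (compl_edge_subset_right n e) ∘ₗ LinearMap.proj (e + 1)

/-- The sum of the values at the origin. -/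
noncomputable def verticesToOrigin :
    VertexModule n K →ₗ[MvPolynomial (Fin n) K] VarQuotient K (Finset.univ : Finset (Fin n)) :=
  ∑ e, residue K _ ∘ₗ LinearMap.proj e

variable {n K}

lemma edgesToVertices_mk (p : Fin n → MvPolynomial (Fin n) K) (e : Fin n) :
    edgesToVertices n K (fun e => Submodule.Quotient.mk (p e)) e =
      Submodule.Quotient.mk (p e - p (e + 1)) := rfl

lemma residue_edgesToVertices (w : EdgeModule n K) (e : Fin n) :
    residue K _ (edgesToVertices n K w e) = residue K _ (w e) - residue K _ (w (e + 1)) := by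
  choose p hp using fun e => Submodule.Quotient.mk_surjective _ (w e)
  obtain rfl : (fun e => Submodule.Quotient.mk (p e)) = w := funext hp
  rfl

lemma verticesToOrigin_apply (w : VertexModule n K) :
    verticesToOrigin n K w = ∑ e, residue K _ (w e) := by
  simp only [verticesToOrigin, LinearMap.coe_sum, Finset.sum_apply, LinearMap.comp_apply,
    LinearMap.proj_apply]

lemma verticesToOrigin_mk_eq_zero_iff (q : Fin n → MvPolynomial (Fin n) K) :
    verticesToOrigin n K (fun e => Submodule.Quotient.mk (q e)) = 0 ↔
      ∑ e, constantCoeff (q e) = 0 := by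
  rw [← map_sum, ← mem_varIdeal_univ, ← Submodule.Quotient.mk_eq_zero, ← Submodule.mkQ_apply,
    map_sum, verticesToOrigin_apply]
  rfl

lemma verticesToOrigin_single (e : Fin n) (a : VarQuotient K ({e + 1}ᶜ : Finset (Fin n))) :
    verticesToOrigin n K (Pi.single e a) = residue K _ a := by
  rw [verticesToOrigin_apply, Finset.sum_eq_single_of_mem e (Finset.mem_univ e), Pi.single_eq_same]
  intro e' _ he'
  rw [Pi.single_eq_of_ne he', map_zero]

lemma verticesToOrigin_surjective : Function.Surjective (verticesToOrigin n K) := by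
  intro a
  obtain ⟨b, rfl⟩ := varFactor_surjective (Finset.subset_univ {(0 : Fin n) + 1}ᶜ) a
  exact ⟨Pi.single 0 b, verticesToOrigin_single 0 b⟩

lemma verticesToOrigin_edgesToVertices (w : EdgeModule n K) :
    verticesToOrigin n K (edgesToVertices n K w) = 0 := by
  simp only [verticesToOrigin_apply, residue_edgesToVertices, Finset.sum_sub_distrib]
  exact sub_eq_zero.2 (Equiv.sum_comp (Equiv.addRight (1 : Fin n)) fun e => residue K _ (w e)).symm

/-- Subtract the constant terms, which are differences of constants on the edges, and correct by
functions on the edges vanishing at all vertices but one. -/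
lemma edgesToVertices_exact (hn : 2 ≤ n) :
    Function.Exact (edgesToVertices n K) (verticesToOrigin n K) := by
  refine fun w => ⟨fun h => ?_, ?_⟩
  · choose q hq using fun e => Submodule.Quotient.mk_surjective _ (w e)
    obtain rfl : (fun e => Submodule.Quotient.mk (q e)) = w := funext hq
    obtain ⟨c, hc⟩ := exists_sub_add_one_eq ((verticesToOrigin_mk_eq_zero_iff q).1 h)
    have hq' (e : Fin n) : ∃ r ∈ varIdeal K {e + 1},
        q e - C (constantCoeff (q e)) - r ∈ varIdeal K {e + 1}ᶜ := by
      have hmem : q e - C (constantCoeff (q e)) ∈ varIdeal K {e + 1} ⊔ varIdeal K {e + 1}ᶜ := by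
        rw [← varIdeal_union, Finset.union_compl, mem_varIdeal_univ, map_sub, constantCoeff_C,
          sub_self]
      obtain ⟨r, hr, s, hs, hrs⟩ := Submodule.mem_sup.1 hmem
      exact ⟨r, hr, by rwa [← hrs, add_sub_cancel_left]⟩
    choose r hr hqr using hq'
    refine ⟨fun e => Submodule.Quotient.mk (C (c e) - r (e - 1)), funext fun e => ?_⟩
    have hr' : r (e - 1) ∈ varIdeal K {e + 1}ᶜ := by
      refine varIdeal_mono ?_ (hr (e - 1))
      rw [sub_add_cancel, Finset.singleton_subset_iff, Finset.mem_compl, Finset.mem_singleton]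
      exact (add_one_ne hn e).symm
    rw [edgesToVertices_mk (fun e => C (c e) - r (e - 1)), add_sub_cancel_right,
      Submodule.Quotient.eq]
    convert neg_mem (add_mem (hqr e) hr') using 1
    rw [← hc, C_sub]
    ring
  · rintro ⟨w, rfl⟩
    exact verticesToOrigin_edgesToVertices w

/-- Over a cycle, the residues of the components of a chain agree on all edges if they agree at all
vertices, and `i ∈ S` forces the residue of the `S`-component to vanish on the edge `{i, i + 1}`. -/
lemma koszulHomologyMap_edgesToVertices_injective (d : ℕ) :
    Function.Injective (koszulHomologyMap (indets (Fin n) K) (d + 1) (edgesToVertices n K)) := by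
  rw [koszulHomologyMap_injective_iff]
  intro z hz hgz
  have hres (S : Finset (Fin n)) (e : Fin n) :
      residue K _ (z S e) = residue K _ (z S (e + 1)) := by
    have h := comp_mem_koszulBoundaries hgz
      (residue K ({e + 1}ᶜ : Finset (Fin n)) ∘ₗ LinearMap.proj e)
    rw [koszulBoundaries_varQuotient_univ, Submodule.mem_bot] at h
    exact sub_eq_zero.1 ((residue_edgesToVertices (z S) e).symm.trans (congrFun h S))
  rw [mem_koszulBoundaries_varProduct_iff hz]
  intro e S hS
  obtain ⟨i, hi⟩ : S.Nonempty := Finset.card_pos.1 (by rw [(Finset.mem_powersetCard.1 hS).2]; omega)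
  rw [eq_of_forall_eq_add_one (f := fun e => residue K _ (z S e)) (hres S) e i]
  refine residue_eq_zero_of_koszulD_eq_zero (i := i) (z := fun S => z S i) ?_ ?_ hi
  · rw [Finset.notMem_compl]
    exact Finset.mem_insert_self _ _
  · exact (comp_mem_koszulCycles hz (LinearMap.proj i)).2

/-- A component `S ≠ univ` of a cycle at the origin is lifted to a vertex outside `S`. -/
lemma koszulHomologyMap_verticesToOrigin_surjective {d : ℕ} (hd : d < n) :
    Function.Surjective (koszulHomologyMap (indets (Fin n) K) d (verticesToOrigin n K)) := by
  intro a
  obtain ⟨z, rfl⟩ := koszulClass_surjective _ d a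
  have hlift (S : Finset (Fin n)) : ∃ w : VertexModule n K, verticesToOrigin n K w = z.1 S ∧
      ∀ e : Fin n, S ∉ ({e + 1}ᶜ : Finset (Fin n)).powersetCard d → w e = 0 := by
    by_cases hS : S.card = d
    · obtain ⟨v, -, hv⟩ : ∃ v ∈ Finset.univ, v ∉ S :=
        Finset.exists_mem_notMem_of_card_lt_card (by rwa [hS, Finset.card_univ, Fintype.card_fin])
      obtain ⟨b, hb⟩ := varFactor_surjective (Finset.subset_univ {v - 1 + 1}ᶜ) (z.1 S)
      refine ⟨Pi.single (v - 1) b, (verticesToOrigin_single _ b).trans hb, fun e he => ?_⟩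
      rw [Pi.single_eq_of_ne]
      rintro rfl
      apply he
      rw [sub_add_cancel, Finset.mem_powersetCard, Finset.subset_compl_singleton]
      exact ⟨hv, hS⟩
    · exact ⟨0, (map_zero _).trans (z.2.1 S hS).symm, fun _ _ => rfl⟩
  choose w hw hw0 using hlift
  refine ⟨koszulClass _ _ d ⟨w, mem_koszulCycles_varProduct fun e S => hw0 S e⟩, ?_⟩
  rw [koszulHomologyMap_koszulClass]
  exact congrArg _ (Subtype.ext (funext hw))

end CommRing

variable [Field K]

/-- Restriction of functions to the edges. -/
noncomputable def toEdges :
    (MvPolynomial (Fin n) K ⧸ cycleIdeal n K) →ₗ[MvPolynomial (Fin n) K] EdgeModule n K :=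
  LinearMap.pi fun e => Submodule.factor (cycleIdeal_le_varIdeal_edge e)

variable {n K}

lemma toEdges_mk (p : MvPolynomial (Fin n) K) :
    toEdges n K (Submodule.Quotient.mk p) = fun _ => Submodule.Quotient.mk p := rfl

lemma toEdges_injective (hn : 4 ≤ n) : Function.Injective (toEdges n K) := by
  rw [injective_iff_map_eq_zero]
  intro a ha
  obtain ⟨p, rfl⟩ := Submodule.Quotient.mk_surjective _ a
  rw [Submodule.Quotient.mk_eq_zero, mem_cycleIdeal_iff hn]
  exact fun e => (Submodule.Quotient.mk_eq_zero _).1 (congrFun ha e)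

/-- Compatible functions on the edges are glued monomial by monomial: the coefficient of a monomial
is read off any edge which contains its support. -/
lemma toEdges_exact (hn : 3 ≤ n) : Function.Exact (toEdges n K) (edgesToVertices n K) := by
  intro w
  choose p hp using fun e => Submodule.Quotient.mk_surjective _ (w e)
  obtain rfl : (fun e => Submodule.Quotient.mk (p e)) = w := funext hp
  constructor
  · intro h
    have hcoeff (m : Fin n →₀ ℕ) (e : Fin n) (hm : m.support ⊆ {e + 1}) :
        coeff m (p e) = coeff m (p (e + 1)) := by
      rw [← sub_eq_zero, ← coeff_sub]
      exact mem_varIdeal_compl.1 ((Submodule.Quotient.mk_eq_zero _).1 (congrFun h e)) m hm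
    have hedge (m : Fin n →₀ ℕ) : ∃ e' : Fin n, ∀ e : Fin n, m.support ⊆ {e, e + 1} →
        coeff m (p e') = coeff m (p e) := by
      by_cases hm : ∃ e : Fin n, m.support ⊆ {e, e + 1}
      · obtain ⟨e', he'⟩ := hm
        exact ⟨e', fun e => eq_of_subset_edges (f := fun e => coeff m (p e)) hn (hcoeff m) he'⟩
      · exact ⟨0, fun e he => absurd ⟨e, he⟩ hm⟩
    choose ε hε using hedge
    obtain ⟨q, hq⟩ := exists_coeff_eq p ε
    refine ⟨Submodule.Quotient.mk q, funext fun e => ?_⟩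
    rw [toEdges_mk, Submodule.Quotient.eq, mem_varIdeal_compl]
    intro m hm
    rw [coeff_sub, hq, hε m e hm, sub_self]
  · rintro ⟨a, ha⟩
    obtain ⟨q, rfl⟩ := Submodule.Quotient.mk_surjective _ a
    rw [← ha, toEdges_mk]
    funext e
    rw [edgesToVertices_mk (fun _ => q), sub_self]
    rfl

/-- The alternating sum of lengths along the coresolution of the coordinate ring by the products
over the edges, over the vertices and over the origin. -/
theorem length_koszulHomology_cycle {d : ℕ} (hd : d + 4 ≤ n) :
    ((n * (n - 1).choose (d + 2) : ℕ) : ℕ∞) = ((n * (n - 2).choose (d + 2) : ℕ) : ℕ∞) +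
      Module.length (MvPolynomial (Fin n) K)
        (KoszulHomology (MvPolynomial (Fin n) K ⧸ cycleIdeal n K) (indets (Fin n) K) (d + 1)) +
      ((n.choose (d + 2) : ℕ) : ℕ∞) := by
  have hedge (e : Fin n) : ({e, e + 1}ᶜ : Finset (Fin n)).card = n - 2 := by
    rw [Finset.card_compl, Finset.card_pair (add_one_ne (by omega) e).symm, Fintype.card_fin]
  have hvertex (e : Fin n) : ({e + 1}ᶜ : Finset (Fin n)).card = n - 1 := by
    rw [Finset.card_compl, Finset.card_singleton, Fintype.card_fin]
  have hE := length_koszulHomology_varProduct (K := K) (fun e : Fin n => {e, e + 1}ᶜ) (d + 2)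
  have hV := length_koszulHomology_varProduct (K := K) (fun e : Fin n => {e + 1}ᶜ) (d + 2)
  have hO := length_koszulHomology_varQuotient K (Finset.univ : Finset (Fin n)) (d + 2)
  simp only [hedge, hvertex, Finset.card_univ, Fintype.card_fin, Finset.sum_const,
    smul_eq_mul] at hE hV hO
  let N := LinearMap.ker (verticesToOrigin n K)
  let g : EdgeModule n K →ₗ[MvPolynomial (Fin n) K] N :=
    (edgesToVertices n K).codRestrict N verticesToOrigin_edgesToVertices
  have hg : Function.Surjective g := by
    rintro ⟨w, hw⟩
    obtain ⟨y, rfl⟩ := (edgesToVertices_exact (by omega) w).1 hw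
    exact ⟨y, rfl⟩
  have hexact : Function.Exact (toEdges n K) g := fun w => by
    rw [← toEdges_exact (by omega) w, ← Submodule.coe_eq_zero]
    rfl
  have hinj (k : ℕ) : Function.Injective
      (koszulHomologyMap (N := EdgeModule n K) (N' := N) (indets (Fin n) K) (k + 1) g) := by
    refine Function.Injective.of_comp
      (f := koszulHomologyMap (N := N) (indets (Fin n) K) (k + 1) N.subtype) ?_
    rw [← LinearMap.coe_comp, ← koszulHomologyMap_comp]
    exact koszulHomologyMap_edgesToVertices_injective k
  rw [← hE, ← hV, ← hO, ← length_koszulHomology_succ_of_injective _ (d + 1)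
    (toEdges_injective (by omega)) hg hexact (hinj d) (hinj (d + 1))]
  exact length_koszulHomology_of_surjective (A := N) (f := N.subtype) _ (d + 2) N.injective_subtype
    verticesToOrigin_surjective (by rw [LinearMap.exact_iff, Submodule.range_subtype])
    (koszulHomologyMap_verticesToOrigin_surjective (by omega))
    (koszulHomologyMap_verticesToOrigin_surjective (by omega))

end CycleResolution

/-! ### Standard tableaux of near-hook shape -/

section PointedSubsets

variable {α : Type*} [DecidableEq α] {s : Finset α} {d : ℕ} {p : α × Finset α}

/-- The pairs `(x, A)` of a point `x ∈ s` and a `d`-element subset `A ⊆ s` avoiding it. -/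
def pointedSubsets (s : Finset α) (d : ℕ) : Finset (α × Finset α) :=
  (s ×ˢ s.powersetCard d).filter fun p => p.1 ∉ p.2

lemma mem_pointedSubsets :
    p ∈ pointedSubsets s d ↔ p.1 ∈ s ∧ p.2 ⊆ s ∧ p.2.card = d ∧ p.1 ∉ p.2 := by
  simp only [pointedSubsets, Finset.mem_filter, Finset.mem_product, Finset.mem_powersetCard,
    and_assoc]

lemma card_pointedSubsets :
    (pointedSubsets s d).card = s.card * (s.card - 1).choose d := by
  have hfiber (x : α) (hx : x ∈ s) :
      (∑ A ∈ s.powersetCard d, if x ∉ A then 1 else 0) = (s.card - 1).choose d := by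
    have herase : (s.powersetCard d).filter (fun A => x ∉ A) = (s.erase x).powersetCard d := by
      ext A
      simp only [Finset.mem_filter, Finset.mem_powersetCard, Finset.subset_erase]
      tauto
    rw [← Finset.card_filter, herase, Finset.card_powersetCard, Finset.card_erase_of_mem hx]
  rw [pointedSubsets, Finset.card_filter, Finset.sum_product, Finset.sum_congr rfl hfiber,
    Finset.sum_const, smul_eq_mul]

/-- The points of `s` lying neither in `A` nor equal to `x`, for a pair `p = (x, A)`. -/
def remainder (s : Finset α) (p : α × Finset α) : Finset α := s \ insert p.1 p.2

lemma mem_remainder {y : α} : y ∈ remainder s p ↔ y ∈ s ∧ y ≠ p.1 ∧ y ∉ p.2 := by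
  simp only [remainder, Finset.mem_sdiff, Finset.mem_insert, not_or]

lemma card_remainder (hp : p ∈ pointedSubsets s d) :
    (remainder s p).card = s.card - (d + 1) := by
  obtain ⟨hx, hA, hcard, hxA⟩ := mem_pointedSubsets.1 hp
  rw [remainder, Finset.card_sdiff_of_subset (Finset.insert_subset hx hA),
    Finset.card_insert_of_notMem hxA, hcard]

end PointedSubsets

section AdmissiblePairs

variable {α : Type*} [LinearOrder α] {s : Finset α} {d m : ℕ} {p : α × Finset α}

/-- The pairs `(x, A)` in `pointedSubsets s d` for which `x` is the least element neither of
`A ∪ {x}` nor of `s \ A`. -/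
def admissiblePairs (s : Finset α) (d : ℕ) : Finset (α × Finset α) :=
  (pointedSubsets s d).filter fun p => (∃ a ∈ p.2, a < p.1) ∧ ∃ b ∈ remainder s p, b < p.1

lemma mem_admissiblePairs : p ∈ admissiblePairs s d ↔
    p ∈ pointedSubsets s d ∧ (∃ a ∈ p.2, a < p.1) ∧ ∃ b ∈ remainder s p, b < p.1 :=
  Finset.mem_filter

lemma card_admissiblePairs_add_card_filter :
    (admissiblePairs s d).card + ((pointedSubsets s d).filter fun p =>
      (∀ a ∈ p.2, p.1 ≤ a) ∨ ∀ b ∈ remainder s p, p.1 ≤ b).card =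
    (pointedSubsets s d).card := by
  rw [admissiblePairs, ← Finset.card_filter_add_card_filter_not (s := pointedSubsets s d)
    (fun p => (∃ a ∈ p.2, a < p.1) ∧ ∃ b ∈ remainder s p, b < p.1)]
  congr 2
  refine Finset.filter_congr fun p _ => ?_
  rw [not_and_or]
  push Not
  rfl

lemma isLeast_insert_iff {x : α} {A : Finset α} :
    IsLeast (insert x A : Finset α) x ↔ ∀ a ∈ A, x ≤ a := by
  simp [IsLeast, lowerBounds]

lemma isLeast_sdiff_iff (hp : p ∈ pointedSubsets s d) :
    IsLeast (s \ p.2 : Finset α) p.1 ↔ ∀ b ∈ remainder s p, p.1 ≤ b := by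
  obtain ⟨hx, -, -, hxA⟩ := mem_pointedSubsets.1 hp
  have hsdiff : s \ p.2 = insert p.1 (remainder s p) := by
    rw [remainder, Finset.sdiff_insert, Finset.insert_erase (Finset.mem_sdiff.2 ⟨hx, hxA⟩)]
  rw [hsdiff, isLeast_insert_iff]

lemma card_filter_forall_le :
    ((pointedSubsets s d).filter fun p => ∀ a ∈ p.2, p.1 ≤ a).card = s.card.choose (d + 1) := by
  rw [← Finset.card_powersetCard]
  refine Finset.card_bij (fun p _ => insert p.1 p.2) ?_ ?_ ?_
  · intro p hp
    obtain ⟨hx, hA, hcard, hxA⟩ := mem_pointedSubsets.1 (Finset.mem_filter.1 hp).1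
    rw [Finset.mem_powersetCard, Finset.card_insert_of_notMem hxA, hcard]
    exact ⟨Finset.insert_subset hx hA, rfl⟩
  · rintro ⟨x, A⟩ hp ⟨y, B⟩ hq (h : insert x A = insert y B)
    obtain ⟨hp, hxmin⟩ := Finset.mem_filter.1 hp
    obtain ⟨hq, hymin⟩ := Finset.mem_filter.1 hq
    have hxA : x ∉ A := (mem_pointedSubsets.1 hp).2.2.2
    have hyB : y ∉ B := (mem_pointedSubsets.1 hq).2.2.2
    obtain rfl : x = y :=
      (isLeast_insert_iff.2 hxmin).unique (h ▸ isLeast_insert_iff.2 hymin)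
    rw [← Finset.erase_insert hxA, h, Finset.erase_insert hyB]
  · intro S hS
    obtain ⟨hS, hcard⟩ := Finset.mem_powersetCard.1 hS
    have hne : S.Nonempty := Finset.card_pos.1 (by omega)
    have hmin := S.min'_mem hne
    refine ⟨(S.min' hne, S.erase (S.min' hne)), Finset.mem_filter.2 ⟨mem_pointedSubsets.2
      ⟨hS hmin, (S.erase_subset _).trans hS, ?_, S.notMem_erase _⟩, fun a ha => ?_⟩,
      Finset.insert_erase hmin⟩
    · rw [Finset.card_erase_of_mem hmin, hcard, Nat.add_sub_cancel]
    · exact (S.min'_lt_of_mem_erase_min' hne ha).le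

lemma card_filter_forall_remainder_le (hd : d < s.card) :
    ((pointedSubsets s d).filter fun p => ∀ b ∈ remainder s p, p.1 ≤ b).card =
      s.card.choose d := by
  rw [← Finset.card_powersetCard]
  refine Finset.card_bij (fun p _ => p.2) ?_ ?_ ?_
  · intro p hp
    obtain ⟨-, hA, hcard, -⟩ := mem_pointedSubsets.1 (Finset.mem_filter.1 hp).1
    exact Finset.mem_powersetCard.2 ⟨hA, hcard⟩
  · rintro ⟨x, A⟩ hp ⟨y, B⟩ hq (rfl : A = B)
    obtain ⟨hp, hxmin⟩ := Finset.mem_filter.1 hp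
    obtain ⟨hq, hymin⟩ := Finset.mem_filter.1 hq
    obtain rfl : x = y :=
      ((isLeast_sdiff_iff hp).2 hxmin).unique ((isLeast_sdiff_iff hq).2 hymin)
    rfl
  · intro A hA
    obtain ⟨hA, hcard⟩ := Finset.mem_powersetCard.1 hA
    have hne : (s \ A).Nonempty := by
      rw [← Finset.card_pos, Finset.card_sdiff_of_subset hA]
      omega
    have hleast := Finset.isLeast_min' _ hne
    obtain ⟨hx, hxA⟩ := Finset.mem_sdiff.1 (Finset.min'_mem _ hne)
    have hp : ((s \ A).min' hne, A) ∈ pointedSubsets s d :=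
      mem_pointedSubsets.2 ⟨hx, hA, hcard, hxA⟩
    exact ⟨_, Finset.mem_filter.2 ⟨hp, (isLeast_sdiff_iff hp).1 hleast⟩, rfl⟩

lemma card_filter_forall_le_and (hs : s.Nonempty) :
    ((pointedSubsets s d).filter fun p =>
      (∀ a ∈ p.2, p.1 ≤ a) ∧ ∀ b ∈ remainder s p, p.1 ≤ b).card = (s.card - 1).choose d := by
  have hmin := s.min'_mem hs
  have heq : ((pointedSubsets s d).filter fun p =>
      (∀ a ∈ p.2, p.1 ≤ a) ∧ ∀ b ∈ remainder s p, p.1 ≤ b) =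
      ((s.erase (s.min' hs)).powersetCard d).map (.sectR (s.min' hs) _) := by
    ext ⟨x, A⟩
    simp only [Finset.mem_filter, Finset.mem_map, Finset.mem_powersetCard, Finset.subset_erase,
      Function.Embedding.sectR_apply, Prod.mk.injEq, exists_eq_right_right, mem_pointedSubsets,
      mem_remainder]
    constructor
    · rintro ⟨⟨hx, hA, hcard, hxA⟩, hle, hle'⟩
      obtain rfl : s.min' hs = x := by
        refine (s.isLeast_min' hs).unique ⟨hx, fun y hy => ?_⟩
        by_cases hyA : y ∈ A
        · exact hle y hyA
        by_cases hyx : y = x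
        · exact hyx.ge
        · exact hle' y ⟨hy, hyx, hyA⟩
      exact ⟨⟨⟨hA, hxA⟩, hcard⟩, rfl⟩
    · rintro ⟨⟨⟨hA, hxA⟩, hcard⟩, rfl⟩
      exact ⟨⟨hmin, hA, hcard, hxA⟩, fun a ha => s.min'_le a (hA ha),
        fun b hb => s.min'_le b hb.1⟩
  rw [heq, Finset.card_map, Finset.card_powersetCard, Finset.card_erase_of_mem hmin]

lemma card_admissiblePairs_add (hs : s.card = m + 1) (hd : d ≤ m) :
    (admissiblePairs s d).card + (m + 2).choose (d + 1) = (m + 2) * m.choose d := by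
  have hunion := Finset.card_union_add_card_inter
    ((pointedSubsets s d).filter fun p => ∀ a ∈ p.2, p.1 ≤ a)
    ((pointedSubsets s d).filter fun p => ∀ b ∈ remainder s p, p.1 ≤ b)
  rw [← Finset.filter_or, ← Finset.filter_and, card_filter_forall_le,
    card_filter_forall_remainder_le (by omega),
    card_filter_forall_le_and (Finset.card_pos.1 (by omega)), hs, Nat.add_sub_cancel] at hunion
  have hsplit := card_admissiblePairs_add_card_filter (s := s) (d := d)
  rw [card_pointedSubsets, hs, Nat.add_sub_cancel] at hsplit
  have hpascal : (m + 2).choose (d + 1) = (m + 1).choose d + (m + 1).choose (d + 1) :=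
    Nat.choose_succ_succ (m + 1) d
  have hmul : (m + 2) * m.choose d = (m + 1) * m.choose d + m.choose d := by ring
  omega

end AdmissiblePairs

section Enumeration

variable {A : Finset ℕ} {k : ℕ}

lemma card_toFinset_ofPred_mem (hA : (Set.ofPred (· ∈ A)).Finite) :
    hA.toFinset.card = A.card := by
  congr 1
  ext
  simp

lemma nth_mem_eq_zero (hk : A.card ≤ k) : Nat.nth (· ∈ A) k = 0 :=
  Nat.nth_of_card_le A.finite_toSet (by rwa [card_toFinset_ofPred_mem])

lemma strictMonoOn_nth_mem : StrictMonoOn (Nat.nth (· ∈ A)) (Set.Iio A.card) := by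
  simpa only [card_toFinset_ofPred_mem] using Nat.nth_strictMonoOn (p := (· ∈ A)) A.finite_toSet

lemma image_nth_mem_range : (Finset.range A.card).image (Nat.nth (· ∈ A)) = A := by
  have himage := Nat.image_nth_Iio_card (p := (· ∈ A)) A.finite_toSet
  rw [card_toFinset_ofPred_mem] at himage
  rw [← Finset.coe_inj, Finset.coe_image, Finset.coe_range]
  exact himage

lemma eq_nth_mem_of_strictMonoOn {f : ℕ → ℕ} {m : ℕ} (hf : StrictMonoOn f (Set.Iio m))
    (himage : (Finset.range m).image f = A) (hk : k < m) : f k = Nat.nth (· ∈ A) k := by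
  have hcard : A.card = m := by
    rw [← himage, Finset.card_image_of_injOn (by simpa only [Finset.coe_range] using hf.injOn),
      Finset.card_range]
  have hdomain : {i : ℕ | ∀ hA : (Set.ofPred (· ∈ A)).Finite, i < hA.toFinset.card} =
      Set.Iio m := by
    ext i
    simp only [card_toFinset_ofPred_mem, hcard]
    exact ⟨fun h => h A.finite_toSet, fun h _ => h⟩
  have hsurj : f '' Set.Iio m = Set.ofPred (· ∈ A) := by
    rw [← Finset.coe_range, ← Finset.coe_image, himage]
    rfl
  refine Nat.eq_nth_of_strictMonoOn_of_mapsTo_of_surjOn f ?_ ?_ ?_ (hdomain ▸ hk)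
  · rw [hdomain]
    exact hsurj.ge
  · rw [hdomain]
    exact Set.mapsTo_iff_image_subset.2 hsurj.le
  · rwa [hdomain]

lemma nth_mem_zero_lt {x : ℕ} (h : ∃ y ∈ A, y < x) :
    Nat.nth (· ∈ A) 0 < x := by
  obtain ⟨y, hy, hlt⟩ := h
  rw [Nat.nth_zero]
  exact (Nat.sInf_le hy).trans_lt hlt

end Enumeration

section NearHook

variable {a l : ℕ} {T : ℕ × ℕ → ℕ}

/-- The shape `(a + 1, 2, 1^l)`: a hook of arm `a` and leg `l + 1`, together with the box
`(1, 1)`. -/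
def nearHook (a l : ℕ) : List ℕ := (a + 1) :: 2 :: List.replicate l 1

lemma sum_nearHook : (nearHook a l).sum = a + l + 3 := by
  simp only [nearHook, List.sum_cons, List.sum_replicate, smul_eq_mul, mul_one]
  omega

lemma isCell_nearHook_iff {c : ℕ × ℕ} :
    IsCell (nearHook a l) c ↔
      c = (0, 0) ∨ (∃ k < a, c = (0, k + 1)) ∨ (∃ k < l + 1, c = (k + 1, 0)) ∨ c = (1, 1) := by
  obtain ⟨i, j⟩ := c
  rcases i with _ | _ | i <;> rcases j with _ | _ | j <;>
    simp [nearHook, IsCell, List.getD_eq_getElem?_getD, List.getElem?_replicate] <;> grind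

lemma isCell_nearHook_corner : IsCell (nearHook a l) (0, 0) :=
  isCell_nearHook_iff.2 (Or.inl rfl)

lemma isCell_nearHook_arm {k : ℕ} (hk : k < a) : IsCell (nearHook a l) (0, k + 1) :=
  isCell_nearHook_iff.2 (Or.inr (Or.inl ⟨k, hk, rfl⟩))

lemma isCell_nearHook_leg {k : ℕ} (hk : k < l + 1) : IsCell (nearHook a l) (k + 1, 0) :=
  isCell_nearHook_iff.2 (Or.inr (Or.inr (Or.inl ⟨k, hk, rfl⟩)))

lemma isCell_nearHook_inner : IsCell (nearHook a l) (1, 1) :=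
  isCell_nearHook_iff.2 (Or.inr (Or.inr (Or.inr rfl)))

/-- The entries of the first row of `T` in the columns `1, …, a`. -/
def armEntries (a : ℕ) (T : ℕ × ℕ → ℕ) : Finset ℕ :=
  (Finset.range a).image fun k => T (0, k + 1)

/-- The entries of the first column of `T` in the rows `1, …, l + 1`. -/
def legEntries (l : ℕ) (T : ℕ × ℕ → ℕ) : Finset ℕ :=
  (Finset.range (l + 1)).image fun k => T (k + 1, 0)

lemma mem_armEntries {x : ℕ} : x ∈ armEntries a T ↔ ∃ k < a, T (0, k + 1) = x := by
  simp only [armEntries, Finset.mem_image, Finset.mem_range]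

lemma mem_legEntries {x : ℕ} : x ∈ legEntries l T ↔ ∃ k < l + 1, T (k + 1, 0) = x := by
  simp only [legEntries, Finset.mem_image, Finset.mem_range]

/-- The inner entry of `T` together with its arm entries. A standard tableau of shape
`nearHook a l` can be recovered from this pair. -/
def innerArm (a : ℕ) (T : ℕ × ℕ → ℕ) : ℕ × Finset ℕ := (T (1, 1), armEntries a T)

/-- Standard tableaux of shape `nearHook a l` described through their corner, arm,
leg and inner entry. -/
structure IsNearHookTableau (a l : ℕ) (T : ℕ × ℕ → ℕ) : Prop where
  eq_zero : ∀ c, ¬ IsCell (nearHook a l) c → T c = 0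
  corner : T (0, 0) = 1
  strictMonoOn_arm : StrictMonoOn (fun k => T (0, k + 1)) (Set.Iio a)
  strictMonoOn_leg : StrictMonoOn (fun k => T (k + 1, 0)) (Set.Iio (l + 1))
  arm_lt_inner : T (0, 1) < T (1, 1)
  leg_lt_inner : T (1, 0) < T (1, 1)
  innerArm_mem : innerArm a T ∈ pointedSubsets (Finset.Icc 2 (a + l + 3)) a
  legEntries_eq : legEntries l T = remainder (Finset.Icc 2 (a + l + 3)) (innerArm a T)

namespace IsNearHookTableau

lemma arm_mem_Icc (hT : IsNearHookTableau a l T) {k : ℕ} (hk : k < a) :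
    T (0, k + 1) ∈ Finset.Icc 2 (a + l + 3) :=
  (mem_pointedSubsets.1 hT.innerArm_mem).2.1 (mem_armEntries.2 ⟨k, hk, rfl⟩)

lemma inner_mem_Icc (hT : IsNearHookTableau a l T) : T (1, 1) ∈ Finset.Icc 2 (a + l + 3) :=
  (mem_pointedSubsets.1 hT.innerArm_mem).1

lemma leg_mem_remainder (hT : IsNearHookTableau a l T) {k : ℕ} (hk : k < l + 1) :
    T (k + 1, 0) ∈ remainder (Finset.Icc 2 (a + l + 3)) (innerArm a T) :=
  hT.legEntries_eq ▸ mem_legEntries.2 ⟨k, hk, rfl⟩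

lemma leg_mem_Icc (hT : IsNearHookTableau a l T) {k : ℕ} (hk : k < l + 1) :
    T (k + 1, 0) ∈ Finset.Icc 2 (a + l + 3) :=
  (mem_remainder.1 (hT.leg_mem_remainder hk)).1

lemma arm_ne_inner (hT : IsNearHookTableau a l T) {k : ℕ} (hk : k < a) :
    T (0, k + 1) ≠ T (1, 1) := fun h =>
  (mem_pointedSubsets.1 hT.innerArm_mem).2.2.2 (mem_armEntries.2 ⟨k, hk, h⟩)

lemma leg_ne_inner (hT : IsNearHookTableau a l T) {k : ℕ} (hk : k < l + 1) :
    T (k + 1, 0) ≠ T (1, 1) :=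
  (mem_remainder.1 (hT.leg_mem_remainder hk)).2.1

lemma arm_ne_leg (hT : IsNearHookTableau a l T) {j k : ℕ} (hj : j < a) (hk : k < l + 1) :
    T (0, j + 1) ≠ T (k + 1, 0) := fun h =>
  (mem_remainder.1 (hT.leg_mem_remainder hk)).2.2 (mem_armEntries.2 ⟨j, hj, h⟩)

lemma mem_Icc_of_isCell (hT : IsNearHookTableau a l T) {c : ℕ × ℕ}
    (hc : IsCell (nearHook a l) c) : T c ∈ Finset.Icc 1 (a + l + 3) := by
  have hsub : Finset.Icc 2 (a + l + 3) ⊆ Finset.Icc 1 (a + l + 3) :=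
    Finset.Icc_subset_Icc_left one_le_two
  rcases isCell_nearHook_iff.1 hc with rfl | ⟨k, hk, rfl⟩ | ⟨k, hk, rfl⟩ | rfl
  · rw [hT.corner, Finset.mem_Icc]
    omega
  · exact hsub (hT.arm_mem_Icc hk)
  · exact hsub (hT.leg_mem_Icc hk)
  · exact hsub hT.inner_mem_Icc

lemma eq_of_isCell (hT : IsNearHookTableau a l T) {c c' : ℕ × ℕ}
    (hc : IsCell (nearHook a l) c) (hc' : IsCell (nearHook a l) c') (h : T c = T c') :
    c = c' := by
  have harm (k : ℕ) (hk : k < a) : T (0, 0) ≠ T (0, k + 1) := by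
    have := Finset.mem_Icc.1 (hT.arm_mem_Icc hk)
    have := hT.corner
    omega
  have hleg (k : ℕ) (hk : k < l + 1) : T (0, 0) ≠ T (k + 1, 0) := by
    have := Finset.mem_Icc.1 (hT.leg_mem_Icc hk)
    have := hT.corner
    omega
  have hinner : T (0, 0) ≠ T (1, 1) := by
    have := Finset.mem_Icc.1 hT.inner_mem_Icc
    have := hT.corner
    omega
  rcases isCell_nearHook_iff.1 hc with rfl | ⟨k, hk, rfl⟩ | ⟨k, hk, rfl⟩ | rfl <;>
    rcases isCell_nearHook_iff.1 hc' with rfl | ⟨k', hk', rfl⟩ | ⟨k', hk', rfl⟩ | rfl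
  · rfl
  · exact absurd h (harm k' hk')
  · exact absurd h (hleg k' hk')
  · exact absurd h hinner
  · exact absurd h.symm (harm k hk)
  · rw [hT.strictMonoOn_arm.injOn hk hk' h]
  · exact absurd h (hT.arm_ne_leg hk hk')
  · exact absurd h (hT.arm_ne_inner hk)
  · exact absurd h.symm (hleg k hk)
  · exact absurd h.symm (hT.arm_ne_leg hk' hk)
  · rw [hT.strictMonoOn_leg.injOn hk hk' h]
  · exact absurd h (hT.leg_ne_inner hk)
  · exact absurd h.symm hinner
  · exact absurd h.symm (hT.arm_ne_inner hk')
  · exact absurd h.symm (hT.leg_ne_inner hk')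
  · rfl

lemma lt_right (hT : IsNearHookTableau a l T) {i j : ℕ}
    (hc : IsCell (nearHook a l) (i, j + 1)) : T (i, j) < T (i, j + 1) := by
  rcases isCell_nearHook_iff.1 hc with h | ⟨k, hk, h⟩ | ⟨k, -, h⟩ | h <;>
    simp only [Prod.mk.injEq, Nat.add_eq_zero_iff, Nat.add_right_cancel_iff, one_ne_zero,
      Nat.add_eq_right, and_false] at h
  · obtain ⟨rfl, rfl⟩ := h
    rcases j with _ | j
    · rw [hT.corner]
      exact (Finset.mem_Icc.1 (hT.arm_mem_Icc hk)).1
    · exact hT.strictMonoOn_arm (Nat.lt_of_succ_lt hk) hk (Nat.lt_succ_self j)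
  · obtain ⟨rfl, rfl⟩ := h
    exact hT.leg_lt_inner

lemma lt_below (hT : IsNearHookTableau a l T) {i j : ℕ}
    (hc : IsCell (nearHook a l) (i + 1, j)) : T (i, j) < T (i + 1, j) := by
  rcases isCell_nearHook_iff.1 hc with h | ⟨k, -, h⟩ | ⟨k, hk, h⟩ | h <;>
    simp only [Prod.mk.injEq, Nat.add_eq_zero_iff, Nat.add_right_cancel_iff, one_ne_zero,
      Nat.add_eq_right, and_false, false_and] at h
  · obtain ⟨rfl, rfl⟩ := h
    rcases i with _ | i
    · rw [hT.corner]
      exact (Finset.mem_Icc.1 (hT.leg_mem_Icc hk)).1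
    · exact hT.strictMonoOn_leg (Nat.lt_of_succ_lt hk) hk (Nat.lt_succ_self i)
  · obtain ⟨rfl, rfl⟩ := h
    exact hT.arm_lt_inner

lemma isSYT (hT : IsNearHookTableau a l T) : IsSYT (nearHook a l) T := by
  rw [IsSYT, sum_nearHook]
  exact ⟨hT.eq_zero, fun c hc => Finset.mem_Icc.1 (hT.mem_Icc_of_isCell hc),
    fun c c' => hT.eq_of_isCell, fun i j => hT.lt_right, fun i j => hT.lt_below⟩

end IsNearHookTableau

namespace IsSYT

lemma mem_Icc_one (hT : IsSYT (nearHook a l) T) {c : ℕ × ℕ} (hc : IsCell (nearHook a l) c) :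
    T c ∈ Finset.Icc 1 (a + l + 3) := by
  rw [Finset.mem_Icc, ← sum_nearHook]
  exact hT.2.1 c hc

lemma mem_Icc_two (hT : IsSYT (nearHook a l) T) {c : ℕ × ℕ} (hc : IsCell (nearHook a l) c)
    (hcorner : c ≠ (0, 0)) : T c ∈ Finset.Icc 2 (a + l + 3) := by
  have hrow := hT.2.2.2.1
  have hcol := hT.2.2.2.2
  obtain ⟨c', hc', hlt⟩ : ∃ c', IsCell (nearHook a l) c' ∧ T c' < T c := by
    rcases isCell_nearHook_iff.1 hc with rfl | ⟨k, -, rfl⟩ | ⟨k, hk, rfl⟩ | rfl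
    · exact absurd rfl hcorner
    · exact ⟨(0, k), Nat.lt_of_succ_lt hc, hrow 0 k hc⟩
    · refine ⟨(k, 0), ?_, hcol k 0 hc⟩
      rcases k with _ | k
      · exact isCell_nearHook_corner
      · exact isCell_nearHook_leg (Nat.lt_of_succ_lt hk)
    · exact ⟨(1, 0), Nat.lt_of_succ_lt hc, hrow 1 0 hc⟩
  have h' := Finset.mem_Icc.1 (hT.mem_Icc_one hc')
  have h := Finset.mem_Icc.1 (hT.mem_Icc_one hc)
  exact Finset.mem_Icc.2 ⟨by omega, h.2⟩

lemma strictMonoOn_arm (hT : IsSYT (nearHook a l) T) :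
    StrictMonoOn (fun k => T (0, k + 1)) (Set.Iio a) :=
  strictMonoOn_of_lt_add_one Set.ordConnected_Iio fun k _ _ hk =>
    hT.2.2.2.1 0 (k + 1) (isCell_nearHook_arm hk)

lemma strictMonoOn_leg (hT : IsSYT (nearHook a l) T) :
    StrictMonoOn (fun k => T (k + 1, 0)) (Set.Iio (l + 1)) :=
  strictMonoOn_of_lt_add_one Set.ordConnected_Iio fun k _ _ hk =>
    hT.2.2.2.2 (k + 1) 0 (isCell_nearHook_leg hk)

lemma innerArm_mem (hT : IsSYT (nearHook a l) T) :
    innerArm a T ∈ pointedSubsets (Finset.Icc 2 (a + l + 3)) a := by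
  refine mem_pointedSubsets.2 ⟨hT.mem_Icc_two isCell_nearHook_inner (by simp), ?_, ?_, ?_⟩
  · intro x hx
    obtain ⟨k, hk, rfl⟩ := mem_armEntries.1 hx
    exact hT.mem_Icc_two (isCell_nearHook_arm hk) (by simp)
  · rw [innerArm, armEntries, Finset.card_image_of_injOn
      (by simpa only [Finset.coe_range] using hT.strictMonoOn_arm.injOn), Finset.card_range]
  · intro h
    obtain ⟨k, hk, h⟩ := mem_armEntries.1 h
    simpa using hT.2.2.1 _ _ (isCell_nearHook_arm hk) isCell_nearHook_inner h

lemma legEntries_eq (hT : IsSYT (nearHook a l) T) :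
    legEntries l T = remainder (Finset.Icc 2 (a + l + 3)) (innerArm a T) := by
  refine Finset.eq_of_subset_of_card_le (fun x hx => ?_) ?_
  · obtain ⟨k, hk, rfl⟩ := mem_legEntries.1 hx
    have hcell := isCell_nearHook_leg (a := a) hk
    refine mem_remainder.2 ⟨hT.mem_Icc_two hcell (by simp), fun h => ?_, fun h => ?_⟩
    · simpa using hT.2.2.1 _ _ hcell isCell_nearHook_inner h
    · obtain ⟨j, hj, h⟩ := mem_armEntries.1 h
      simpa using hT.2.2.1 _ _ (isCell_nearHook_arm hj) hcell h
  · rw [card_remainder hT.innerArm_mem, legEntries, Finset.card_image_of_injOn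
      (by simpa only [Finset.coe_range] using hT.strictMonoOn_leg.injOn), Finset.card_range,
      Nat.card_Icc]
    omega

lemma corner (hT : IsSYT (nearHook a l) T) : T (0, 0) = 1 := by
  have hinj {c : ℕ × ℕ} (hc : IsCell (nearHook a l) c) (h : T c = T (0, 0)) : c = (0, 0) :=
    hT.2.2.1 _ _ hc isCell_nearHook_corner h
  obtain ⟨hpos, hle⟩ := Finset.mem_Icc.1 (hT.mem_Icc_one isCell_nearHook_corner)
  by_contra hne
  have hmem : T (0, 0) ∈ legEntries l T := by
    rw [hT.legEntries_eq, mem_remainder]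
    refine ⟨Finset.mem_Icc.2 ⟨by omega, hle⟩, fun h => ?_, fun h => ?_⟩
    · simpa using hinj isCell_nearHook_inner h.symm
    · obtain ⟨k, hk, h⟩ := mem_armEntries.1 h
      simpa using hinj (isCell_nearHook_arm hk) h
  obtain ⟨k, hk, h⟩ := mem_legEntries.1 hmem
  simpa using hinj (isCell_nearHook_leg hk) h

lemma isNearHookTableau (hT : IsSYT (nearHook a l) T) : IsNearHookTableau a l T where
  eq_zero := hT.1
  corner := hT.corner
  strictMonoOn_arm := hT.strictMonoOn_arm
  strictMonoOn_leg := hT.strictMonoOn_leg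
  arm_lt_inner := hT.2.2.2.2 0 1 isCell_nearHook_inner
  leg_lt_inner := hT.2.2.2.1 1 0 isCell_nearHook_inner
  innerArm_mem := hT.innerArm_mem
  legEntries_eq := hT.legEntries_eq

end IsSYT

lemma innerArm_mem_admissiblePairs (ha : 0 < a) (hT : IsNearHookTableau a l T) :
    innerArm a T ∈ admissiblePairs (Finset.Icc 2 (a + l + 3)) a :=
  mem_admissiblePairs.2 ⟨hT.innerArm_mem, ⟨_, mem_armEntries.2 ⟨0, ha, rfl⟩, hT.arm_lt_inner⟩,
    ⟨_, hT.leg_mem_remainder l.succ_pos, hT.leg_lt_inner⟩⟩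

/-- The filling with corner entry `1`, arm `p.2` and inner entry `p.1`, the leg consisting of the
remaining elements of `{2, …, n}`. Off the diagram the value is `0`, since `Nat.nth` vanishes
beyond the last element of a finite set. -/
noncomputable def nearHookFilling (n : ℕ) (p : ℕ × Finset ℕ) : ℕ × ℕ → ℕ
  | (0, 0) => 1
  | (0, k + 1) => Nat.nth (· ∈ p.2) k
  | (k + 1, 0) => Nat.nth (· ∈ remainder (Finset.Icc 2 n) p) k
  | (1, 1) => p.1
  | _ => 0

lemma innerArm_nearHookFilling {n : ℕ} {p : ℕ × Finset ℕ} (hp : p.2.card = a) :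
    innerArm a (nearHookFilling n p) = p := by
  subst hp
  exact Prod.ext rfl image_nth_mem_range

lemma card_remainder_Icc {p : ℕ × Finset ℕ}
    (hp : p ∈ pointedSubsets (Finset.Icc 2 (a + l + 3)) a) :
    (remainder (Finset.Icc 2 (a + l + 3)) p).card = l + 1 := by
  rw [card_remainder hp, Nat.card_Icc]
  omega

lemma nearHookFilling_eq_zero {p : ℕ × Finset ℕ}
    (hp : p ∈ pointedSubsets (Finset.Icc 2 (a + l + 3)) a) {c : ℕ × ℕ}
    (hc : ¬ IsCell (nearHook a l) c) : nearHookFilling (a + l + 3) p c = 0 := by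
  have hcard : p.2.card = a := (mem_pointedSubsets.1 hp).2.2.1
  match c with
  | (0, 0) => exact absurd isCell_nearHook_corner hc
  | (0, k + 1) =>
    exact nth_mem_eq_zero (hcard.trans_le (not_lt.1 fun hk => hc (isCell_nearHook_arm hk)))
  | (k + 1, 0) =>
    exact nth_mem_eq_zero
      ((card_remainder_Icc hp).trans_le (not_lt.1 fun hk => hc (isCell_nearHook_leg hk)))
  | (1, 1) => exact absurd isCell_nearHook_inner hc
  | (1, k + 2) => rfl
  | (i + 2, k + 1) => cases k <;> rfl

lemma isNearHookTableau_nearHookFilling {p : ℕ × Finset ℕ}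
    (hp : p ∈ admissiblePairs (Finset.Icc 2 (a + l + 3)) a) :
    IsNearHookTableau a l (nearHookFilling (a + l + 3) p) := by
  obtain ⟨hmem, harm, hleg⟩ := mem_admissiblePairs.1 hp
  have hcard : p.2.card = a := (mem_pointedSubsets.1 hmem).2.2.1
  have hcard' := card_remainder_Icc hmem
  have hinner := innerArm_nearHookFilling (n := a + l + 3) hcard
  refine ⟨fun c => nearHookFilling_eq_zero hmem, rfl, ?_, ?_, nth_mem_zero_lt harm,
    nth_mem_zero_lt hleg, ?_, ?_⟩
  · exact hcard ▸ strictMonoOn_nth_mem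
  · exact hcard' ▸ strictMonoOn_nth_mem
  · rwa [hinner]
  · rw [hinner, legEntries, ← hcard']
    exact image_nth_mem_range

lemma nearHookFilling_innerArm (hT : IsNearHookTableau a l T) :
    nearHookFilling (a + l + 3) (innerArm a T) = T := by
  funext c
  by_cases hc : IsCell (nearHook a l) c
  · rcases isCell_nearHook_iff.1 hc with rfl | ⟨k, hk, rfl⟩ | ⟨k, hk, rfl⟩ | rfl
    · exact hT.corner.symm
    · exact (eq_nth_mem_of_strictMonoOn hT.strictMonoOn_arm rfl hk).symm
    · exact (eq_nth_mem_of_strictMonoOn hT.strictMonoOn_leg hT.legEntries_eq hk).symm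
    · rfl
  · rw [hT.eq_zero c hc, nearHookFilling_eq_zero hT.innerArm_mem hc]

lemma sytCount_nearHook (ha : 0 < a) :
    sytCount (nearHook a l) = (admissiblePairs (Finset.Icc 2 (a + l + 3)) a).card := by
  rw [sytCount, ← Nat.card_eq_finsetCard]
  exact Nat.card_congr
    { toFun := fun T => ⟨innerArm a T, innerArm_mem_admissiblePairs ha T.2.isNearHookTableau⟩
      invFun := fun p => ⟨_, (isNearHookTableau_nearHookFilling p.2).isSYT⟩
      left_inv := fun T => Subtype.ext (nearHookFilling_innerArm T.2.isNearHookTableau)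
      right_inv := fun p => Subtype.ext (innerArm_nearHookFilling
        (mem_pointedSubsets.1 (mem_admissiblePairs.1 p.2).1).2.2.1) }

lemma sytCount_nearHook_add (ha : 0 < a) :
    sytCount (nearHook a l) + (a + l + 3).choose (a + 1) =
      (a + l + 3) * (a + l + 1).choose a := by
  rw [sytCount_nearHook ha]
  exact card_admissiblePairs_add (by rw [Nat.card_Icc]; omega) (by omega)

end NearHook

/-- For `n ≥ 5` and `1 ≤ d ≤ n - 3`, the `d`-th total Betti number of `R/Jₙ`
(the rank of the `d`-th module in any minimal free resolution of `R/Jₙ`) equals the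
number of standard Young tableaux of shape `(d+1, 2, 1^(n-d-3))`. -/
theorem betti_eq_syt (K : Type) [Field K] (n d : ℕ) (hn : 5 ≤ n)
    (hd1 : 1 ≤ d) (hd2 : d ≤ n - 3)
    (F : MinimalFreeResolution n K (MvPolynomial (Fin n) K ⧸ cycleIdeal n K)) :
    F.b d = sytCount ((d + 1) :: 2 :: List.replicate (n - d - 3) 1) := by
  obtain ⟨e, rfl⟩ : ∃ e, d = e + 1 := ⟨d - 1, by omega⟩
  obtain ⟨l, rfl⟩ : ∃ l, n = e + 1 + l + 3 := ⟨n - (e + 1) - 3, by omega⟩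
  have hbetti := length_koszulHomology_cycle (K := K) (n := e + 1 + l + 3) (d := e) (by omega)
  rw [F.length_koszulHomology] at hbetti
  norm_cast at hbetti
  have hsyt : sytCount (nearHook (e + 1) l) + (e + 1 + l + 3).choose (e + 2) =
      (e + 1 + l + 3) * (e + 1 + l + 1).choose (e + 1) := sytCount_nearHook_add (by omega)
  have hpascal : (e + 1 + l + 2).choose (e + 2) =
      (e + 1 + l + 1).choose (e + 1) + (e + 1 + l + 1).choose (e + 2) :=
    Nat.choose_succ_succ _ _
  rw [show e + 1 + l + 3 - 1 = e + 1 + l + 2 by omega,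
    show e + 1 + l + 3 - 2 = e + 1 + l + 1 by omega, hpascal, mul_add] at hbetti
  rw [show e + 1 + l + 3 - (e + 1) - 3 = l by omega]
  change F.b (e + 1) = sytCount (nearHook (e + 1) l)
  omega
end
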